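/- arXiv:1709.03194 — 9 statements merged into one kernel-verified Lean document; each statement's English description precedes it below -/
import Mathlib

section
/- Let s > 0 be real. There exists a constant C₀(s) > 0, depending only on s, such that for all real numbers k₁, k₂, k₃, k₄ with k₁ + k₂ + k₃ + k₄ = 0, one has |k₁|k₁|^{2s} + k₂|k₂|^{2s} + k₃|k₃|^{2s} + k₄|k₄|^{2s}| ≤ C₀(s) |m₁|^s |m₂|^s |m₃|, where (m₁, m₂, m₃, m₄) is a permutation of (k₁, k₂, k₃, k₄) with |m₁| ≥ |m₂| ≥ |m₃| ≥ |m₄|. -/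
/-!
Write `f x = x |x|^{2s}`, an odd function. Both the vanishing of the sum and the quantity to be
bounded are symmetric, so everything may be stated for the ordered frequencies `mᵢ`. The two largest
nearly cancel: the mean value estimate `|f x + f y| ≤ (2s+1) |x|^{2s} |x + y|` for `|y| ≤ |x|`
(`abs_add_le_of_abs_le`, which rests on Bernoulli's inequality), together with
`|m₁ + m₂| = |m₃ + m₄| ≤ 2|m₃|`, bounds `|f m₁ + f m₂|` by a multiple of `|m₁|^{2s} |m₃|`. The terms
`f m₃` and `f m₄` are each at most `|m₁|^{2s} |m₃|`. Finally `|m₁| ≤ 3|m₂|` turns `|m₁|^{2s}` into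
`3^s |m₁|^s |m₂|^s`.
-/

/-- Tangent line bound at `a` for the convex function `t ↦ t ^ (2s+1)`, from Bernoulli's inequality
applied to `b / a`. -/
lemma mul_rpow_sub_le {s a b : ℝ} (hs : 0 < s) (hb : 0 ≤ b) (hba : b ≤ a) :
    a * a ^ (2 * s) - b * b ^ (2 * s) ≤ (2 * s + 1) * a ^ (2 * s) * (a - b) := by
  rcases (hb.trans hba).eq_or_lt with rfl | ha
  · obtain rfl : b = 0 := le_antisymm hba hb
    simp
  have hr : 0 ≤ b / a := by positivity
  have h := one_add_mul_self_le_rpow_one_add (s := b / a - 1) (by linarith)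
    (p := 2 * s + 1) (by linarith)
  rw [add_sub_cancel, Real.rpow_add_one' hr (by positivity), Real.div_rpow hb ha.le] at h
  have hA : 0 < a ^ (2 * s) := Real.rpow_pos_of_pos ha _
  have h2 := mul_le_mul_of_nonneg_left h (mul_pos ha hA).le
  have e1 : a * a ^ (2 * s) * (b ^ (2 * s) / a ^ (2 * s) * (b / a)) = b * b ^ (2 * s) := by
    field_simp
  have e2 : a * a ^ (2 * s) * (1 + (2 * s + 1) * (b / a - 1))
      = a * a ^ (2 * s) - (2 * s + 1) * a ^ (2 * s) * (a - b) := by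
    field_simp
    ring
  rw [e1, e2] at h2
  linarith

/-- Mean value estimate for the odd function `x |x|^{2s}`, comparing its values at `x` and `-y`. -/
lemma abs_add_le_of_abs_le {s x y : ℝ} (hs : 0 < s) (hyx : |y| ≤ |x|) :
    |x * |x| ^ (2 * s) + y * |y| ^ (2 * s)| ≤ (2 * s + 1) * |x| ^ (2 * s) * |x + y| := by
  have hx0 : 0 ≤ |x| ^ (2 * s) := by positivity
  have hy0 : 0 ≤ |y| ^ (2 * s) := by positivity
  have hP : |y| ^ (2 * s) ≤ |x| ^ (2 * s) :=
    Real.rpow_le_rpow (abs_nonneg _) hyx (by positivity)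
  have key := mul_rpow_sub_le hs (abs_nonneg y) hyx
  -- Equal signs: no cancellation is needed, since `|x| + |y| = |x + y|`.
  have same : |x| * |x| ^ (2 * s) + |y| * |y| ^ (2 * s)
      ≤ (2 * s + 1) * |x| ^ (2 * s) * (|x| + |y|) := by
    have h1 := mul_le_mul_of_nonneg_left hP (abs_nonneg y)
    have h2 : 0 ≤ 2 * s * |x| ^ (2 * s) * (|x| + |y|) := by positivity
    linarith
  have mono : |y| * |y| ^ (2 * s) ≤ |x| * |x| ^ (2 * s) := by gcongr
  have p1 : 0 ≤ |x| * |x| ^ (2 * s) := by positivity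
  have p2 : 0 ≤ |y| * |y| ^ (2 * s) := by positivity
  generalize |x| ^ (2 * s) = X at *
  generalize |y| ^ (2 * s) = Y at *
  rcases le_total 0 x with hx | hx <;> rcases le_total 0 y with hy | hy
  · rw [abs_of_nonneg (add_nonneg hx hy)]
    simp only [abs_of_nonneg hx, abs_of_nonneg hy] at *
    rw [abs_le]; constructor <;> linarith
  · simp only [abs_of_nonneg hx, abs_of_nonpos hy] at *
    rw [abs_of_nonneg (by linarith : 0 ≤ x + y), abs_le]
    constructor <;> linarith
  · simp only [abs_of_nonpos hx, abs_of_nonneg hy] at *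
    rw [abs_of_nonpos (by linarith : x + y ≤ 0), abs_le]
    constructor <;> linarith
  · rw [abs_of_nonpos (add_nonpos hx hy)]
    simp only [abs_of_nonpos hx, abs_of_nonpos hy] at *
    rw [abs_le]; constructor <;> linarith

/-- Lemma A.1 of Hunter–Shu. For every `s > 0` there is a constant
`C₀(s) > 0` such that for all reals `k₁,…,k₄` summing to zero, if `(m₁,m₂,m₃,m₄)` is a
permutation of `(k₁,k₂,k₃,k₄)` with `|m₁| ≥ |m₂| ≥ |m₃| ≥ |m₄|`, then
`|k₁|k₁|^{2s} + k₂|k₂|^{2s} + k₃|k₃|^{2s} + k₄|k₄|^{2s}| ≤ C₀(s)|m₁|^s |m₂|^s |m₃|`. -/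
theorem statement0 (s : ℝ) (hs : 0 < s) :
    ∃ C : ℝ, 0 < C ∧ ∀ k₁ k₂ k₃ k₄ m₁ m₂ m₃ m₄ : ℝ,
      k₁ + k₂ + k₃ + k₄ = 0 →
      ({m₁, m₂, m₃, m₄} : Multiset ℝ) = ({k₁, k₂, k₃, k₄} : Multiset ℝ) →
      |m₂| ≤ |m₁| → |m₃| ≤ |m₂| → |m₄| ≤ |m₃| →
      |k₁ * |k₁| ^ (2 * s) + k₂ * |k₂| ^ (2 * s) + k₃ * |k₃| ^ (2 * s) + k₄ * |k₄| ^ (2 * s)|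
        ≤ C * |m₁| ^ s * |m₂| ^ s * |m₃| := by
  refine ⟨(4 * s + 4) * 3 ^ s, by positivity, ?_⟩
  intro k₁ k₂ k₃ k₄ m₁ m₂ m₃ m₄ hk hm h21 h32 h43
  have hsum : m₁ + m₂ + m₃ + m₄ = 0 := by
    have h := congrArg Multiset.sum hm
    simp only [Multiset.insert_eq_cons, Multiset.sum_cons, Multiset.sum_singleton] at h
    linarith
  have hf := congrArg (fun M : Multiset ℝ => (M.map fun x => x * |x| ^ (2 * s)).sum) hm
  simp only [Multiset.insert_eq_cons, Multiset.map_cons, Multiset.map_singleton,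
    Multiset.sum_cons, Multiset.sum_singleton, ← add_assoc] at hf
  rw [← hf]
  have h12 := abs_add_le_of_abs_le hs h21
  have h34 : |m₁ + m₂| ≤ 2 * |m₃| := by
    rw [show m₁ + m₂ = -(m₃ + m₄) by linarith, abs_neg]
    linarith [abs_add_le m₃ m₄]
  have h13 : |m₁| ≤ 3 * |m₂| := by
    rw [show m₁ = -(m₂ + m₃ + m₄) by linarith, abs_neg]
    linarith [abs_add_three m₂ m₃ m₄]
  have small : ∀ m : ℝ, |m| ≤ |m₃| → |m * |m| ^ (2 * s)| ≤ |m₁| ^ (2 * s) * |m₃| := by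
    intro m h
    rw [abs_mul, abs_of_nonneg (by positivity : 0 ≤ |m| ^ (2 * s)), mul_comm]
    have : |m| ≤ |m₁| := by linarith
    gcongr
  have h3 := small m₃ le_rfl
  have h4 := small m₄ h43
  have hpow : |m₁| ^ (2 * s) ≤ 3 ^ s * |m₁| ^ s * |m₂| ^ s := by
    have h : |m₁| ^ s ≤ 3 ^ s * |m₂| ^ s := by
      rw [← Real.mul_rpow (by norm_num) (abs_nonneg _)]
      gcongr
    rw [two_mul, Real.rpow_add_of_nonneg (abs_nonneg _) hs.le hs.le]
    calc |m₁| ^ s * |m₁| ^ s ≤ |m₁| ^ s * (3 ^ s * |m₂| ^ s) := by gcongr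
      _ = _ := by ring
  calc _ ≤ |m₁ * |m₁| ^ (2 * s) + m₂ * |m₂| ^ (2 * s)| + |m₃ * |m₃| ^ (2 * s)|
          + |m₄ * |m₄| ^ (2 * s)| := abs_add_three _ _ _
    _ ≤ (2 * s + 1) * |m₁| ^ (2 * s) * (2 * |m₃|) + |m₁| ^ (2 * s) * |m₃|
          + |m₁| ^ (2 * s) * |m₃| := by
        have : (2 * s + 1) * |m₁| ^ (2 * s) * |m₁ + m₂|
            ≤ (2 * s + 1) * |m₁| ^ (2 * s) * (2 * |m₃|) := by gcongr
        linarith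
    _ = (4 * s + 4) * |m₁| ^ (2 * s) * |m₃| := by ring
    _ ≤ (4 * s + 4) * (3 ^ s * |m₁| ^ s * |m₂| ^ s) * |m₃| := by gcongr
    _ = _ := by ring
end

section
/- Let s > 0 and define f(x, y) = (1 − x^{2s+1} − y^{2s+1} + (x + y − 1)|x + y − 1|^{2s}) / (x^s y) for (x, y) in R with (x, y) ≠ (1, 0). Then lim_{y → 0⁺} sup_{0 ≤ η ≤ 2} |f(1 − ηy, y)| = 2(2s + 1). -/
/-!
Write `p = 2s + 1`. On the line `x = 1 - η y` one has `x + y - 1 = (1 - η) y`, so the numerator of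
`f` is `(1 - (1 - η y)^p) + y^p ((1 - η)|1 - η|^{2s} - 1)`. For `0 ≤ η ≤ 2` Bernoulli's inequality
puts the first term in `[0, 2 p y]`, and the second lies in `[-2 y^p, 0]`; as `y ≤ 1 ≤ p`, the
numerator is at most `2 p y` in absolute value. Hence `|f| ≤ 2 p / (1 - 2 y)^s`
(`abs_fquot_le`), and this bound tends to `2 p`. Conversely the single value `η = 2` gives
`f(1 - 2 y, y) → 2 p` (`tendsto_fquot_two`), by differentiating `(1 - 2 y)^p` at `0`.
The supremum is squeezed between these two quantities.
-/

/-- The function `f(x,y)` from the proof of Lemma A.1, for a given exponent `s`. -/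
noncomputable def fquot (s x y : ℝ) : ℝ :=
  (1 - x ^ (2 * s + 1) - y ^ (2 * s + 1) + (x + y - 1) * |x + y - 1| ^ (2 * s)) /
    (x ^ s * y)

lemma fquot_line_num {s y : ℝ} (hy : 0 < y) (η : ℝ) :
    ((1 - η * y) + y - 1) * |(1 - η * y) + y - 1| ^ (2 * s)
      = y ^ (2 * s + 1) * ((1 - η) * |1 - η| ^ (2 * s)) := by
  have h : (1 - η * y) + y - 1 = y * (1 - η) := by ring
  rw [h, abs_mul, abs_of_pos hy, Real.mul_rpow hy.le (abs_nonneg _), Real.rpow_add hy,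
    Real.rpow_one]
  ring

lemma abs_fquot_le {s y η : ℝ} (hs : 0 < s) (hy : 0 < y) (hy2 : y < 1 / 2)
    (h0 : 0 ≤ η) (h2 : η ≤ 2) :
    |fquot s (1 - η * y) y| ≤ 2 * (2 * s + 1) / (1 - 2 * y) ^ s := by
  have hηy : η * y ≤ 2 * y := mul_le_mul_of_nonneg_right h2 hy.le
  have hηy0 : 0 ≤ η * y := mul_nonneg h0 hy.le
  have hx : 0 < 1 - η * y := by linarith
  have hb : 1 + (2 * s + 1) * (-(η * y)) ≤ (1 + -(η * y)) ^ (2 * s + 1) :=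
    one_add_mul_self_le_rpow_one_add (by linarith) (by linarith)
  rw [← sub_eq_add_neg] at hb
  have hx1 : (1 - η * y) ^ (2 * s + 1) ≤ 1 :=
    Real.rpow_le_one hx.le (by linarith) (by linarith)
  have hyp0 : 0 < y ^ (2 * s + 1) := Real.rpow_pos_of_pos hy _
  have hyp : y ^ (2 * s + 1) ≤ y := by
    simpa using Real.rpow_le_rpow_of_exponent_ge hy (by linarith)
      (show (1 : ℝ) ≤ 2 * s + 1 by linarith)
  have ha1 : |1 - η| ≤ 1 := abs_le.2 ⟨by linarith, by linarith⟩
  have ht : |(1 - η) * |1 - η| ^ (2 * s)| ≤ 1 := by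
    rw [abs_mul, abs_of_nonneg (Real.rpow_nonneg (abs_nonneg _) _)]
    exact mul_le_one₀ ha1 (Real.rpow_nonneg (abs_nonneg _) _)
      (Real.rpow_le_one (abs_nonneg _) ha1 (by linarith))
  obtain ⟨ht1, ht2⟩ := abs_le.1 ht
  have hd : (1 - 2 * y) ^ s ≤ (1 - η * y) ^ s :=
    Real.rpow_le_rpow (by linarith) (by linarith) hs.le
  have hd0 : 0 < (1 - 2 * y) ^ s := Real.rpow_pos_of_pos (by linarith) _
  have hd1 : 0 < (1 - η * y) ^ s := hd0.trans_le hd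
  unfold fquot
  rw [fquot_line_num hy, abs_div, abs_of_pos (mul_pos hd1 hy),
    div_le_div_iff₀ (mul_pos hd1 hy) hd0]
  set t := (1 - η) * |1 - η| ^ (2 * s)
  have hN : |1 - (1 - η * y) ^ (2 * s + 1) - y ^ (2 * s + 1) + y ^ (2 * s + 1) * t|
      ≤ 2 * (2 * s + 1) * y := by
    have hsy : 0 < s * y := mul_pos hs hy
    have hp : (2 * s + 1) * (η * y) ≤ (2 * s + 1) * (2 * y) :=
      mul_le_mul_of_nonneg_left hηy (by linarith)
    rw [abs_le]
    constructor <;> nlinarith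
  calc _ ≤ 2 * (2 * s + 1) * y * (1 - η * y) ^ s :=
        mul_le_mul hN hd hd0.le (by positivity)
    _ = _ := by ring

lemma tendsto_one_sub_two_mul_rpow (s : ℝ) :
    Filter.Tendsto (fun y : ℝ => (1 - 2 * y) ^ s) (nhdsWithin 0 (Set.Ioi 0)) (nhds 1) := by
  have h : ContinuousAt (fun y : ℝ => (1 - 2 * y) ^ s) 0 :=
    ContinuousAt.rpow_const (by fun_prop) (Or.inl (by norm_num))
  have h' := h.tendsto
  simp only [mul_zero, sub_zero, Real.one_rpow] at h'
  exact h'.mono_left nhdsWithin_le_nhds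

lemma tendsto_fquot_two {s : ℝ} (hs : 0 < s) :
    Filter.Tendsto (fun y : ℝ => fquot s (1 - 2 * y) y) (nhdsWithin 0 (Set.Ioi 0))
      (nhds (2 * (2 * s + 1))) := by
  have hder : HasDerivAt (fun y : ℝ => (1 - 2 * y) ^ (2 * s + 1)) (-(2 * (2 * s + 1))) 0 := by
    have h1 : HasDerivAt (fun y : ℝ => 1 - 2 * y) (-2) 0 := by
      simpa using ((hasDerivAt_id (0 : ℝ)).const_mul 2).const_sub 1
    have h2 := h1.rpow_const (p := 2 * s + 1) (Or.inl (by norm_num))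
    convert h2 using 1
    norm_num
  have hslope := hder.tendsto_slope_zero_right
  have hpow : Filter.Tendsto (fun y : ℝ => y ^ (2 * s)) (nhdsWithin 0 (Set.Ioi 0)) (nhds 0) := by
    have h := (Real.continuousAt_rpow_const 0 (2 * s) (Or.inr (by linarith))).tendsto
    rw [Real.zero_rpow (by linarith)] at h
    exact h.mono_left nhdsWithin_le_nhds
  have hlim := (hslope.neg.sub (hpow.const_mul 2)).div (tendsto_one_sub_two_mul_rpow s) one_ne_zero
  have hval : (- -(2 * (2 * s + 1)) - 2 * 0) / 1 = 2 * (2 * s + 1) := by ring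
  rw [hval] at hlim
  refine hlim.congr' ?_
  filter_upwards [Ioo_mem_nhdsGT (show (0 : ℝ) < 1 / 2 by norm_num)] with y hy
  obtain ⟨hy, hy2⟩ := hy
  have hd0 : 0 < (1 - 2 * y) ^ s := Real.rpow_pos_of_pos (by linarith) _
  have hpy : y ^ (2 * s + 1) = y ^ (2 * s) * y := by rw [Real.rpow_add hy, Real.rpow_one]
  have habs : |(1 : ℝ) - 2| = 1 := by norm_num
  simp only [Pi.div_apply, fquot, smul_eq_mul, zero_add, mul_zero, sub_zero, Real.one_rpow]
  rw [fquot_line_num hy, habs, Real.one_rpow, hpy]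
  field_simp
  ring

/-- For `s > 0`,
`lim_{y → 0⁺} sup_{0 ≤ η ≤ 2} |f(1 − ηy, y)| = 2(2s + 1)`. -/
theorem statement1 (s : ℝ) (hs : 0 < s) :
    Filter.Tendsto
      (fun y : ℝ => sSup {z : ℝ | ∃ η : ℝ, 0 ≤ η ∧ η ≤ 2 ∧ z = |fquot s (1 - η * y) y|})
      (nhdsWithin 0 (Set.Ioi 0)) (nhds (2 * (2 * s + 1))) := by
  have hup : Filter.Tendsto (fun y : ℝ => 2 * (2 * s + 1) / (1 - 2 * y) ^ s)
      (nhdsWithin 0 (Set.Ioi 0)) (nhds (2 * (2 * s + 1))) := by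
    have h := (tendsto_const_nhds (x := 2 * (2 * s + 1))).div
      (tendsto_one_sub_two_mul_rpow s) one_ne_zero
    rw [div_one] at h
    exact h
  have hIoo := Ioo_mem_nhdsGT (show (0 : ℝ) < 1 / 2 by norm_num)
  refine tendsto_of_tendsto_of_tendsto_of_le_of_le' (tendsto_fquot_two hs) hup ?_ ?_
  · filter_upwards [hIoo] with y hy
    refine (le_abs_self _).trans (le_csSup ⟨2 * (2 * s + 1) / (1 - 2 * y) ^ s, ?_⟩
      ⟨2, by norm_num, le_rfl, rfl⟩)
    rintro z ⟨η, h0, h2, rfl⟩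
    exact abs_fquot_le hs hy.1 hy.2 h0 h2
  · filter_upwards [hIoo] with y hy
    refine csSup_le ⟨_, 2, by norm_num, le_rfl, rfl⟩ ?_
    rintro z ⟨η, h0, h2, rfl⟩
    exact abs_fquot_le hs hy.1 hy.2 h0 h2
end

section
/- Let 0 < α ≤ 2 and let a(x) = |x|^{3−α}. Define h(x, y) = a(1) + a(x) − a(1 − y) − a(x + y). Then there exists a constant C > 0 such that |h(x, y)| ≤ C |x + y − 1| y for all (x, y) in R. -/
/-!
Write `p = 3 - α ∈ [1, 3)` and `φ s = (s + y) ^ p - s ^ p`. Then `h(x, y) = φ (1 - y) - φ x`, so two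
applications of the mean value inequality give `|h| ≤ sup |a''| * |x + y - 1| * y`. For `p < 2` the
second derivative is singular at the origin, but on `R` one has `1/3 ≤ x` and `y ≤ 2/3`, so all
arguments involved lie in `[1/3, 2]`, where `|a''| ≤ 18`.
-/

/-- The feasible region `R = {(x,y) : 0 ≤ y ≤ x ≤ 1, 1 ≤ x + 2y ≤ 2}`. -/
def regionR : Set (ℝ × ℝ) :=
  {p | 0 ≤ p.2 ∧ p.2 ≤ p.1 ∧ p.1 ≤ 1 ∧ 1 ≤ p.1 + 2 * p.2 ∧ p.1 + 2 * p.2 ≤ 2}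

/-- `h(x,y) = a(1) + a(x) − a(1 − y) − a(x + y)`. -/
noncomputable def hfun (a : ℝ → ℝ) (x y : ℝ) : ℝ := a 1 + a x - a (1 - y) - a (x + y)

/-- The bound on `a''` for `a t = t ^ p`: here `p * (p - 1) ≤ 6` and `t ^ (p - 2) ≤ 3`. -/
lemma abs_second_deriv_le {p t : ℝ} (hp1 : 1 ≤ p) (hp3 : p ≤ 3) (ht : t ∈ Set.Icc (1 / 3 : ℝ) 2) :
    |p * ((p - 1) * t ^ (p - 1 - 1))| ≤ 18 := by
  obtain ⟨h1, h2⟩ := ht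
  have ht0 : 0 < t := by linarith
  have hpow : t ^ (p - 1 - 1) ≤ 3 := by
    rcases le_total 1 t with h | h
    · calc t ^ (p - 1 - 1) ≤ t ^ (1 : ℝ) := Real.rpow_le_rpow_of_exponent_le h (by linarith)
        _ ≤ 3 := by rw [Real.rpow_one]; linarith
    · calc t ^ (p - 1 - 1) ≤ t ^ (-1 : ℝ) :=
            Real.rpow_le_rpow_of_exponent_ge ht0 h (by linarith)
        _ ≤ 3 := by
            rw [Real.rpow_neg_one]
            exact inv_le_of_inv_le₀ (by norm_num) (by linarith)
  have hpos : 0 ≤ t ^ (p - 1 - 1) := by positivity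
  have hq : 0 ≤ p - 1 := by linarith
  rw [abs_of_nonneg (by positivity)]
  calc p * ((p - 1) * t ^ (p - 1 - 1)) ≤ 3 * (2 * 3) := by gcongr; linarith
    _ = 18 := by norm_num

/-- The derivative `p * t ^ (p - 1)` is `18`-Lipschitz on `[1/3, 2]`. -/
lemma abs_deriv_sub_le {p s t : ℝ} (hp1 : 1 ≤ p) (hp3 : p ≤ 3) (hs : s ∈ Set.Icc (1 / 3 : ℝ) 2)
    (ht : t ∈ Set.Icc (1 / 3 : ℝ) 2) :
    |p * t ^ (p - 1) - p * s ^ (p - 1)| ≤ 18 * |t - s| := by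
  refine (convex_Icc (1 / 3 : ℝ) 2).norm_image_sub_le_of_norm_hasDerivWithin_le
    (f := fun u => p * u ^ (p - 1)) (f' := fun u => p * ((p - 1) * u ^ (p - 1 - 1)))
    (fun u hu => ?_) (fun u hu => abs_second_deriv_le hp1 hp3 hu) hs ht
  have hu0 : u ≠ 0 := by linarith [hu.1]
  exact ((Real.hasDerivAt_rpow_const (Or.inl hu0)).const_mul p).hasDerivWithinAt

/-- Lemma A.2 for `a(x) = |x|^{3−α}`, `0 < α ≤ 2`:
there is `C > 0` with `|h(x,y)| ≤ C |x+y−1| y` on `R`. -/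
theorem statement2 (α : ℝ) (hα0 : 0 < α) (hα2 : α ≤ 2) :
    ∃ C : ℝ, 0 < C ∧ ∀ x y : ℝ, (x, y) ∈ regionR →
      |hfun (fun t => |t| ^ (3 - α)) x y| ≤ C * |x + y - 1| * y := by
  refine ⟨18, by norm_num, ?_⟩
  rintro x y ⟨hy0, hyx, hx1, hl, hu⟩
  dsimp only at hy0 hyx hx1 hl hu
  obtain ⟨p, hp⟩ : ∃ p, p = 3 - α := ⟨_, rfl⟩
  have hp1 : 1 ≤ p := by linarith
  have hp3 : p ≤ 3 := by linarith
  have key : |((1 - y + y) ^ p - (1 - y) ^ p) - ((x + y) ^ p - x ^ p)|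
      ≤ (18 * y) * |(1 - y) - x| := by
    refine (convex_Icc (1 / 3 : ℝ) 1).norm_image_sub_le_of_norm_hasDerivWithin_le
      (f := fun s => (s + y) ^ p - s ^ p)
      (f' := fun s => p * (s + y) ^ (p - 1) - p * s ^ (p - 1))
      (fun s hs => ?_) (fun s hs => ?_) ⟨by linarith, hx1⟩ ⟨by linarith, by linarith⟩
    · have hs0 : s ≠ 0 := by linarith [hs.1]
      have hsy : s + y ≠ 0 := by linarith [hs.1]
      have h1 := (Real.hasDerivAt_rpow_const (p := p) (Or.inl hsy)).comp_add_const s y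
      exact (h1.sub (Real.hasDerivAt_rpow_const (Or.inl hs0))).hasDerivWithinAt
    · have h := abs_deriv_sub_le hp1 hp3 (s := s) (t := s + y)
        ⟨hs.1, by linarith [hs.2]⟩ ⟨by linarith [hs.1], by linarith [hs.2]⟩
      rwa [add_sub_cancel_left, abs_of_nonneg hy0] at h
  have e1 : |(1 - y) - x| = |x + y - 1| := by
    rw [← abs_neg]; congr 1; ring
  rw [e1, sub_add_cancel] at key
  simp only [hfun, ← hp]
  rw [abs_of_nonneg (by linarith : (0 : ℝ) ≤ 1 - y), abs_of_nonneg (by linarith : 0 ≤ x),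
    abs_of_nonneg (by linarith : 0 ≤ x + y), abs_one]
  calc _ = |((1 : ℝ) ^ p - (1 - y) ^ p) - ((x + y) ^ p - x ^ p)| := by congr 1; ring
    _ ≤ _ := key
    _ = _ := by ring
end

section
/- Let 1 < α ≤ 2 and let S be the kernel built from a(k) = |k|^{3−α}. There exists a constant C₁(α), depending only on α, such that for all real numbers k₁, k₂, k₃, k₄ with k₁ + k₂ + k₃ + k₄ = 0, one has |S(k₁, k₂, k₃, k₄)| ≤ C₁(α) |m₃|^{2−α} |m₄|, where (m₁, m₂, m₃, m₄) is a permutation of (k₁, k₂, k₃, k₄) with |m₁| ≥ |m₂| ≥ |m₃| ≥ |m₄|. -/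
/-!
Write `p = 3 - α ∈ [1, 2)` and `a(t) = |t| ^ p`, and consider the mixed second difference
`D(x, y, z) = a(x+y+z) - a(x+y) - a(x+z) + a(x)`. Since `a` is even and vanishes at `0`, the
constraint `m₁ + m₂ + m₃ + m₄ = 0` gives `S = D(m₂, m₃, m₄) - D(0, m₃, m₄)`.

So it suffices to bound `|D(x, y, z)|` by `4 |y| ^ (p - 1) |z|`, uniformly in `x`. For `p > 1` the
derivative `a'(t) = p |t| ^ (p - 2) t` is Hölder continuous with exponent `p - 1`
(`abs_signedRpow_sub_le`), and the mean value inequality applied to `s ↦ a(x+y+s) - a(x+s)` on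
`[0, z]` gives the bound (`abs_secondDiff_le`). For `p = 1` the bound is the triangle inequality.
The ordering of the `|mᵢ|` plays no role in the estimate.
-/

/-- The kernel `S` built from a function `a`:
`S(k₁,k₂,k₃,k₄) = Σ a(kᵢ) − (1/2) Σ_{i<j} a(kᵢ+kⱼ)`. -/
noncomputable def Sker (a : ℝ → ℝ) (k₁ k₂ k₃ k₄ : ℝ) : ℝ :=
  a k₁ + a k₂ + a k₃ + a k₄ -
    (1 / 2) * (a (k₁ + k₂) + a (k₁ + k₃) + a (k₁ + k₄) +
      a (k₂ + k₃) + a (k₂ + k₄) + a (k₃ + k₄))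

lemma abs_rpow_sub_one_mul_self {q u : ℝ} (hq : 0 < q) (hu : 0 ≤ u) :
    |u| ^ (q - 1) * u = u ^ q := by
  rcases hu.eq_or_lt with rfl | hu
  · simp [Real.zero_rpow hq.ne']
  · rw [abs_of_pos hu, Real.rpow_sub_one hu.ne']
    field_simp

/-- The signed power `t ↦ sign(t) |t| ^ q`, written `|t| ^ (q - 1) * t`, is Hölder continuous with
exponent `q` for `0 < q ≤ 1`. -/
lemma abs_signedRpow_sub_le {q : ℝ} (hq : 0 < q) (hq1 : q ≤ 1) (u v : ℝ) :
    |(|u| ^ (q - 1) * u - |v| ^ (q - 1) * v)| ≤ 2 * |u - v| ^ q := by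
  have same : ∀ u v : ℝ, 0 ≤ v → v ≤ u →
      |(|u| ^ (q - 1) * u - |v| ^ (q - 1) * v)| ≤ 2 * |u - v| ^ q := by
    intro u v hv huv
    rw [abs_rpow_sub_one_mul_self hq hv, abs_rpow_sub_one_mul_self hq (hv.trans huv),
      abs_of_nonneg (sub_nonneg.2 (Real.rpow_le_rpow hv huv hq.le)),
      abs_of_nonneg (sub_nonneg.2 huv)]
    have h := Real.rpow_add_le_add_rpow (sub_nonneg.2 huv) hv hq.le hq1
    rw [sub_add_cancel] at h
    have := Real.rpow_nonneg (sub_nonneg.2 huv) q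
    linarith
  have opp : ∀ u v : ℝ, 0 ≤ u → v ≤ 0 →
      |(|u| ^ (q - 1) * u - |v| ^ (q - 1) * v)| ≤ 2 * |u - v| ^ q := by
    intro u v hu hv
    have hv' : 0 ≤ -v := by linarith
    have e : |u| ^ (q - 1) * u - |v| ^ (q - 1) * v = u ^ q + (-v) ^ q := by
      rw [← abs_rpow_sub_one_mul_self hq hu, ← abs_rpow_sub_one_mul_self hq hv', abs_neg]
      ring
    have h1 := Real.rpow_le_rpow hu (show u ≤ u - v by linarith) hq.le
    have h2 := Real.rpow_le_rpow hv' (show -v ≤ u - v by linarith) hq.le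
    rw [e, abs_of_nonneg (by positivity), abs_of_nonneg (show 0 ≤ u - v by linarith)]
    linarith
  have key : ∀ u v : ℝ, v ≤ u →
      |(|u| ^ (q - 1) * u - |v| ^ (q - 1) * v)| ≤ 2 * |u - v| ^ q := by
    intro u v huv
    rcases le_total 0 v with hv | hv
    · exact same u v hv huv
    · rcases le_total 0 u with hu | hu
      · exact opp u v hu hv
      · have h := same (-v) (-u) (by linarith) (by linarith)
        rw [abs_neg, abs_neg] at h
        convert h using 2 <;> ring_nf
  rcases le_total v u with h | h
  · exact key u v h
  · rw [abs_sub_comm, abs_sub_comm u v]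
    exact key v u h

/-- Bound on the mixed second difference of `|t| ^ p`, uniform in the base point `x`. -/
lemma abs_secondDiff_le {p : ℝ} (hp1 : 1 ≤ p) (hp2 : p ≤ 2) (x y z : ℝ) :
    |(|x + y + z| ^ p - |x + y| ^ p - |x + z| ^ p + |x| ^ p)| ≤ 4 * |y| ^ (p - 1) * |z| := by
  rcases hp1.eq_or_lt with rfl | hp
  · simp only [Real.rpow_one, sub_self, Real.rpow_zero, mul_one]
    have h1 := abs_abs_sub_abs_le_abs_sub (x + y + z) (x + y)
    have h2 := abs_abs_sub_abs_le_abs_sub (x + z) x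
    rw [add_sub_cancel_left] at h1 h2
    have h := abs_sub (|x + y + z| - |x + y|) (|x + z| - |x|)
    have e : |x + y + z| - |x + y| - |x + z| + |x|
        = (|x + y + z| - |x + y|) - (|x + z| - |x|) := by ring
    rw [e]
    linarith [abs_nonneg z]
  · have hd : ∀ s ∈ (Set.univ : Set ℝ),
        HasDerivWithinAt (fun s => |x + y + s| ^ p - |x + s| ^ p)
          (p * |x + y + s| ^ (p - 2) * (x + y + s) - p * |x + s| ^ (p - 2) * (x + s))
          Set.univ s := by
      intro s _
      have h1 := (hasDerivAt_abs_rpow (x + y + s) hp).comp_const_add (x + y) s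
      have h2 := (hasDerivAt_abs_rpow (x + s) hp).comp_const_add x s
      exact (h1.sub h2).hasDerivWithinAt
    have hb : ∀ s ∈ (Set.univ : Set ℝ),
        ‖p * |x + y + s| ^ (p - 2) * (x + y + s) - p * |x + s| ^ (p - 2) * (x + s)‖
          ≤ 4 * |y| ^ (p - 1) := by
      intro s _
      have h := abs_signedRpow_sub_le (q := p - 1) (by linarith) (by linarith) (x + y + s) (x + s)
      rw [show p - 1 - 1 = p - 2 by ring, show x + y + s - (x + s) = y by ring] at h
      rw [Real.norm_eq_abs, mul_assoc, mul_assoc, ← mul_sub, abs_mul,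
        abs_of_pos (show 0 < p by linarith)]
      have h0 : 0 ≤ |y| ^ (p - 1) := by positivity
      nlinarith
    have h := Convex.norm_image_sub_le_of_norm_hasDerivWithin_le hd hb convex_univ
      (Set.mem_univ 0) (Set.mem_univ z)
    simp only [Real.norm_eq_abs, add_zero, sub_zero] at h
    convert h using 2
    ring

/-- `Sker` is a symmetric function of its arguments: it can be computed from their multiset. -/
lemma Sker_eq_of_multiset_eq (a : ℝ → ℝ) {k₁ k₂ k₃ k₄ m₁ m₂ m₃ m₄ : ℝ}
    (h : ({m₁, m₂, m₃, m₄} : Multiset ℝ) = ({k₁, k₂, k₃, k₄} : Multiset ℝ)) :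
    Sker a k₁ k₂ k₃ k₄ = Sker a m₁ m₂ m₃ m₄ := by
  -- The sum over pairs `i < j` is half of the full double sum with its diagonal removed.
  have key : ∀ x₁ x₂ x₃ x₄ : ℝ, Sker a x₁ x₂ x₃ x₄ =
      (({x₁, x₂, x₃, x₄} : Multiset ℝ).map a).sum - (1 / 4) *
        ((({x₁, x₂, x₃, x₄} : Multiset ℝ).map fun s =>
            (({x₁, x₂, x₃, x₄} : Multiset ℝ).map fun t => a (s + t)).sum).sum
          - (({x₁, x₂, x₃, x₄} : Multiset ℝ).map fun t => a (t + t)).sum) := by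
    intro x₁ x₂ x₃ x₄
    simp only [Multiset.insert_eq_cons, Multiset.map_cons, Multiset.sum_cons,
      Multiset.map_singleton, Multiset.sum_singleton, Sker]
    rw [add_comm x₂ x₁, add_comm x₃ x₁, add_comm x₄ x₁, add_comm x₃ x₂, add_comm x₄ x₂,
      add_comm x₄ x₃]
    ring
  rw [key k₁, key m₁, h]

/-- Lemma A.3. For `1 < α ≤ 2` and the kernel built from
`a(k) = |k|^{3−α}`, there is `C₁(α) > 0` with
`|S(k₁,k₂,k₃,k₄)| ≤ C₁(α) |m₃|^{2−α} |m₄|` whenever `k₁+k₂+k₃+k₄ = 0` and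
`(m₁,m₂,m₃,m₄)` is a decreasing-in-absolute-value rearrangement of the `kᵢ`. -/
theorem statement4 (α : ℝ) (hα1 : 1 < α) (hα2 : α ≤ 2) :
    ∃ C : ℝ, 0 < C ∧ ∀ k₁ k₂ k₃ k₄ m₁ m₂ m₃ m₄ : ℝ,
      k₁ + k₂ + k₃ + k₄ = 0 →
      ({m₁, m₂, m₃, m₄} : Multiset ℝ) = ({k₁, k₂, k₃, k₄} : Multiset ℝ) →
      |m₂| ≤ |m₁| → |m₃| ≤ |m₂| → |m₄| ≤ |m₃| →
      |Sker (fun t => |t| ^ (3 - α)) k₁ k₂ k₃ k₄| ≤ C * |m₃| ^ (2 - α) * |m₄| := by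
  refine ⟨8, by norm_num, fun k₁ k₂ k₃ k₄ m₁ m₂ m₃ m₄ hk hm _ _ _ => ?_⟩
  rw [Sker_eq_of_multiset_eq _ hm]
  have hs : m₁ + m₂ + m₃ + m₄ = 0 := by
    have := congrArg Multiset.sum hm
    simp only [Multiset.insert_eq_cons, Multiset.sum_cons, Multiset.sum_singleton] at this
    linarith
  have h1 := abs_secondDiff_le (p := 3 - α) (by linarith) (by linarith) m₂ m₃ m₄
  have h2 := abs_secondDiff_le (p := 3 - α) (by linarith) (by linarith) 0 m₃ m₄
  rw [show 3 - α - 1 = 2 - α by ring] at h1 h2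
  have e : Sker (fun t => |t| ^ (3 - α)) m₁ m₂ m₃ m₄ =
      (|m₂ + m₃ + m₄| ^ (3 - α) - |m₂ + m₃| ^ (3 - α) - |m₂ + m₄| ^ (3 - α) + |m₂| ^ (3 - α))
      - (|0 + m₃ + m₄| ^ (3 - α) - |0 + m₃| ^ (3 - α) - |0 + m₄| ^ (3 - α)
        + |(0 : ℝ)| ^ (3 - α)) := by
    simp only [Sker, zero_add, abs_zero, Real.zero_rpow (show 3 - α ≠ 0 by linarith)]
    rw [show m₁ = -(m₂ + m₃ + m₄) by linarith,
      show -(m₂ + m₃ + m₄) + m₂ = -(m₃ + m₄) by ring,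
      show -(m₂ + m₃ + m₄) + m₃ = -(m₂ + m₄) by ring,
      show -(m₂ + m₃ + m₄) + m₄ = -(m₂ + m₃) by ring]
    simp only [abs_neg]
    ring
  rw [e]
  refine (abs_sub _ _).trans ?_
  linarith
end

section
/- Let S be the kernel built from a(k) = −k² log|k| (with a(0) = 0). There exists a constant C₂ > 0 such that for all nonzero real numbers k₁, k₂, k₃, k₄ with k₁ + k₂ + k₃ + k₄ = 0, one has |S(k₁, k₂, k₃, k₄)| ≤ C₂ |m₃| |m₄| log(1 + |m₂ / m₃|), where (m₁, m₂, m₃, m₄) is a permutation of (k₁, k₂, k₃, k₄) with |m₁| ≥ |m₂| ≥ |m₃| ≥ |m₄|. -/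
/-!
Write `m₁ = -(x + y + z)` with `|x| ≥ |y| ≥ |z|`. Since `a` is even, `-S` equals
`F(z) = b(x+y+z) + b(x) + b(y) + b(z) - b(x+y) - b(x+z) - b(y+z)` with `b(t) = t² log|t|`, and
`F(0) = 0`. The function `b` is `C¹` with `b'(t) = 2 t log|t| + t`, so with `φ(t) = t log|t|`
`F'(s) = 2 [(φ(x+s+y) - φ(x+s)) - (φ(s+y) - φ(s))]`.
By scaling, `φ(u+y) - φ(u) = y ψ(u/y) + y log|y|` with `ψ(v) = φ(v+1) - φ(v)`, so the `log|y|`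
terms cancel. As `|ψ(v)| ≤ 2 + log(1+|v|)` (`abs_mulLog_increment_le`), one gets
`|F'(s)| ≤ 18 |y| log(1 + |x/y|)` for `|s| ≤ |y| ≤ |x|`, and the mean value inequality on
`[-|y|, |y|]` yields the bound with constant `18`.
-/

/-- `a(k) = −k² log|k|` (with `a(0) = 0`, since `Real.log 0 = 0`). -/
noncomputable def aLog (t : ℝ) : ℝ := -t ^ 2 * Real.log |t|

/-- The kernel is a function of the multiset of its arguments. -/
theorem Sker_eq_multiset (a : ℝ → ℝ) (k₁ k₂ k₃ k₄ : ℝ) :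
    Sker a k₁ k₂ k₃ k₄ =
      (({k₁, k₂, k₃, k₄} : Multiset ℝ).map a).sum -
        (1 / 4) * ((({k₁, k₂, k₃, k₄} : Multiset ℝ).map fun x =>
          (({k₁, k₂, k₃, k₄} : Multiset ℝ).map fun y => a (x + y)).sum).sum -
          (({k₁, k₂, k₃, k₄} : Multiset ℝ).map fun x => a (x + x)).sum) := by
  simp only [Sker, Multiset.insert_eq_cons, Multiset.map_cons, Multiset.sum_cons,
    Multiset.map_singleton, Multiset.sum_singleton]
  rw [add_comm k₂ k₁, add_comm k₃ k₁, add_comm k₄ k₁, add_comm k₃ k₂, add_comm k₄ k₂,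
    add_comm k₄ k₃]
  ring

theorem hasDerivAt_sq_mul_log (t : ℝ) :
    HasDerivAt (fun t : ℝ => t ^ 2 * Real.log t) (2 * (t * Real.log t) + t) t := by
  rcases eq_or_ne t 0 with rfl | ht
  · rw [hasDerivAt_iff_tendsto_slope]
    have h : Filter.Tendsto (fun t : ℝ => t * Real.log t) (nhdsWithin 0 {0}ᶜ) (nhds 0) := by
      have := (Real.continuous_mul_log.tendsto 0).mono_left
        (nhdsWithin_le_nhds (s := ({0}ᶜ : Set ℝ)))
      simpa using this
    have h0 : 2 * ((0 : ℝ) * Real.log 0) + 0 = 0 := by simp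
    rw [h0]
    refine h.congr' ?_
    filter_upwards [self_mem_nhdsWithin] with u hu
    have hu : u ≠ 0 := hu
    simp only [slope_def_field]
    rw [sub_zero, eq_div_iff hu]
    simp
    ring
  · have h := (hasDerivAt_pow 2 t).mul (Real.hasDerivAt_log ht)
    refine h.congr_deriv ?_
    field_simp
    push_cast
    ring

theorem abs_mul_log_le_one {t : ℝ} (h0 : 0 ≤ t) (h1 : t ≤ 1) : |t * Real.log t| ≤ 1 := by
  rcases h0.eq_or_lt with rfl | h
  · simp
  · rw [mul_comm]
    exact (Real.abs_log_mul_self_lt t h h1).le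

theorem abs_mulLog_increment_le_of_nonneg {v : ℝ} (hv : 0 ≤ v) :
    |(v + 1) * Real.log (v + 1) - v * Real.log v| ≤ 1 + Real.log (1 + v) := by
  rcases hv.eq_or_lt with rfl | h
  · simp
  · have e : (v + 1) * Real.log (v + 1) - v * Real.log v
        = Real.log (1 + v) + v * Real.log ((v + 1) / v) := by
      rw [Real.log_div (by positivity) h.ne', add_comm 1 v]
      ring
    have h1 : 0 ≤ Real.log (1 + v) := Real.log_nonneg (by linarith)
    have h2 : 0 ≤ Real.log ((v + 1) / v) :=
      Real.log_nonneg (by rw [le_div_iff₀ h]; linarith)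
    have h3 : Real.log ((v + 1) / v) ≤ 1 / v := by
      have := Real.log_le_sub_one_of_pos (x := (v + 1) / v) (by positivity)
      have e2 : (v + 1) / v - 1 = 1 / v := by field_simp; ring
      linarith
    have h4 : v * Real.log ((v + 1) / v) ≤ 1 := by
      calc _ ≤ v * (1 / v) := by gcongr
        _ = 1 := by field_simp
    have h5 := mul_nonneg hv h2
    rw [e, abs_of_nonneg (by linarith)]
    linarith

/-- The unit increment of `t log|t|` grows at most logarithmically. The symmetry
`v ↦ -1 - v` reduces `v ≤ -1` to `v ≥ 0`. -/
theorem abs_mulLog_increment_le (v : ℝ) :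
    |(v + 1) * Real.log (v + 1) - v * Real.log v| ≤ 2 + Real.log (1 + |v|) := by
  rcases le_or_gt 0 v with h | h
  · rw [abs_of_nonneg h]
    linarith [abs_mulLog_increment_le_of_nonneg h]
  rcases le_or_gt v (-1) with h1 | h1
  · have h2 := abs_mulLog_increment_le_of_nonneg (v := -1 - v) (by linarith)
    have e1 : -1 - v + 1 = -v := by ring
    have e2 : -1 - v = -(v + 1) := by ring
    have e3 : 1 + (-1 - v) = -v := by ring
    rw [e3, e1, e2, Real.log_neg_eq_log, Real.log_neg_eq_log] at h2
    have e4 : -v * Real.log v - -(v + 1) * Real.log (v + 1)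
        = (v + 1) * Real.log (v + 1) - v * Real.log v := by ring
    rw [e4] at h2
    have h3 : Real.log v ≤ Real.log (1 + |v|) := by
      rw [← Real.log_abs v]
      exact Real.log_le_log (abs_pos.mpr h.ne) (by linarith)
    linarith
  · have a1 := abs_mul_log_le_one (t := v + 1) (by linarith) (by linarith)
    have a2 := abs_mul_log_le_one (t := -v) (by linarith) (by linarith)
    rw [Real.log_neg_eq_log, neg_mul, abs_neg] at a2
    have h3 : 0 ≤ Real.log (1 + |v|) := Real.log_nonneg (by linarith [abs_nonneg v])
    linarith [abs_sub ((v + 1) * Real.log (v + 1)) (v * Real.log v)]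

theorem mulLog_increment_scale {y : ℝ} (hy : y ≠ 0) (u : ℝ) :
    (u + y) * Real.log (u + y) - u * Real.log u =
      y * ((u / y + 1) * Real.log (u / y + 1) - u / y * Real.log (u / y)) + y * Real.log y := by
  -- `t log t` is homogeneous of degree one up to a linear term, including at `t = 0`.
  have key : ∀ w : ℝ, (y * w) * Real.log (y * w) = y * (w * Real.log w) + y * w * Real.log y := by
    intro w
    rcases eq_or_ne w 0 with rfl | hw
    · simp
    · rw [Real.log_mul hy hw]; ring
  have e1 : u + y = y * (u / y + 1) := by field_simp
  have e2 : u = y * (u / y) := by field_simp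
  have k1 := key (u / y + 1)
  have k2 := key (u / y)
  rw [← e1] at k1
  rw [← e2] at k2
  rw [k1, k2]
  linear_combination Real.log y * e1 - Real.log y * e2

/-- The mixed second difference of `t log|t|` appearing in the `z`-derivative of the kernel. -/
theorem abs_mulLog_second_difference_le {x y s : ℝ} (hy : y ≠ 0) (hyx : |y| ≤ |x|)
    (hs : |s| ≤ |y|) :
    |((x + s + y) * Real.log (x + s + y) - (x + s) * Real.log (x + s)) -
      ((s + y) * Real.log (s + y) - s * Real.log s)| ≤ 9 * |y| * Real.log (1 + |x / y|) := by
  have hy' : 0 < |y| := abs_pos.mpr hy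
  have hr : 1 ≤ |x / y| := by rw [abs_div, le_div_iff₀ hy']; linarith
  have hs1 : |s / y| ≤ 1 := by rw [abs_div, div_le_iff₀ hy']; linarith
  set L := Real.log (1 + |x / y|) with hL
  have hL2 : Real.log 2 ≤ L := Real.log_le_log (by norm_num) (by linarith)
  have b1 := abs_mulLog_increment_le ((x + s) / y)
  have b2 := abs_mulLog_increment_le (s / y)
  have c1 : Real.log (1 + |(x + s) / y|) ≤ 2 * L := by
    have : |(x + s) / y| ≤ |x / y| + |s / y| := by rw [add_div]; exact abs_add_le _ _
    calc _ ≤ Real.log ((1 + |x / y|) ^ 2) := by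
          apply Real.log_le_log (by positivity)
          nlinarith
      _ = 2 * L := by rw [Real.log_pow]; push_cast; rfl
  have c2 : Real.log (1 + |s / y|) ≤ Real.log 2 :=
    Real.log_le_log (by positivity) (by linarith)
  have hlog := Real.log_two_gt_d9
  rw [mulLog_increment_scale hy (x + s), mulLog_increment_scale hy s, add_sub_add_right_eq_sub,
    ← mul_sub, abs_mul, mul_comm 9, mul_assoc]
  apply mul_le_mul_of_nonneg_left _ hy'.le
  refine (abs_sub _ _).trans ?_
  linarith

theorem abs_kernel_le {x y z : ℝ} (hy : y ≠ 0) (hyx : |y| ≤ |x|) (hz : |z| ≤ |y|) :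
    |Sker aLog (-(x + y + z)) x y z| ≤ 18 * |y| * |z| * Real.log (1 + |x / y|) := by
  let b : ℝ → ℝ := fun t => t ^ 2 * Real.log t
  let F : ℝ → ℝ := fun s => b (x + y + s) - b (x + s) - b (y + s) + b s
  have hF : ∀ s, HasDerivAt F (2 * (((x + s + y) * Real.log (x + s + y)
      - (x + s) * Real.log (x + s)) - ((s + y) * Real.log (s + y) - s * Real.log s))) s := by
    intro s
    have hd : ∀ c : ℝ, HasDerivAt (fun s => b (c + s))
        (2 * ((c + s) * Real.log (c + s)) + (c + s)) s := fun c =>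
      HasDerivAt.comp_const_add c s (hasDerivAt_sq_mul_log (c + s))
    have h := (((hd (x + y)).sub (hd x)).sub (hd y)).add (hasDerivAt_sq_mul_log s)
    refine h.congr_deriv ?_
    rw [show x + s + y = x + y + s by ring, show s + y = y + s by ring]
    ring
  have hmv := (convex_Icc (-|y|) |y|).norm_image_sub_le_of_norm_hasDerivWithin_le
    (f := F) (C := 18 * |y| * Real.log (1 + |x / y|)) (x := 0) (y := z)
    (fun s _ => (hF s).hasDerivWithinAt)
    (fun s hs => by
      have := abs_mulLog_second_difference_le hy hyx (abs_le.mpr hs)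
      rw [Real.norm_eq_abs, abs_mul, abs_two]
      linarith)
    (by simp) (abs_le.mp hz)
  have e : Sker aLog (-(x + y + z)) x y z = -(F z - F 0) := by
    have e1 : -(x + y + z) + x = -(y + z) := by ring
    have e2 : -(x + y + z) + y = -(x + z) := by ring
    have e3 : -(x + y + z) + z = -(x + y) := by ring
    simp only [Sker, aLog, F, b, e1, e2, e3, Real.log_abs, Real.log_neg_eq_log, add_zero]
    ring
  rw [e, abs_neg]
  rw [Real.norm_eq_abs, Real.norm_eq_abs, sub_zero] at hmv
  linarith

/-- Lemma A.4. For the SQG kernel built from `a(k) = −k² log|k|`,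
there is `C₂ > 0` such that for all nonzero reals `k₁,…,k₄` summing to zero,
`|S(k₁,k₂,k₃,k₄)| ≤ C₂ |m₃| |m₄| log(1 + |m₂/m₃|)`, where `(m₁,m₂,m₃,m₄)` is a
decreasing-in-absolute-value rearrangement of the `kᵢ`. -/
theorem statement5 :
    ∃ C : ℝ, 0 < C ∧ ∀ k₁ k₂ k₃ k₄ m₁ m₂ m₃ m₄ : ℝ,
      k₁ ≠ 0 → k₂ ≠ 0 → k₃ ≠ 0 → k₄ ≠ 0 →
      k₁ + k₂ + k₃ + k₄ = 0 →
      ({m₁, m₂, m₃, m₄} : Multiset ℝ) = ({k₁, k₂, k₃, k₄} : Multiset ℝ) →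
      |m₂| ≤ |m₁| → |m₃| ≤ |m₂| → |m₄| ≤ |m₃| →
      |Sker aLog k₁ k₂ k₃ k₄| ≤ C * |m₃| * |m₄| * Real.log (1 + |m₂ / m₃|) := by
  refine ⟨18, by norm_num, ?_⟩
  intro k₁ k₂ k₃ k₄ m₁ m₂ m₃ m₄ h1 h2 h3 h4 hsum hperm _ h32 h43
  rw [Sker_eq_multiset, ← hperm, ← Sker_eq_multiset]
  have hs := congrArg Multiset.sum hperm
  simp only [Multiset.insert_eq_cons, Multiset.sum_cons, Multiset.sum_singleton] at hs
  have hm3 : m₃ ≠ 0 := by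
    have hmem : m₃ ∈ ({k₁, k₂, k₃, k₄} : Multiset ℝ) := by rw [← hperm]; simp
    simp only [Multiset.insert_eq_cons, Multiset.mem_cons, Multiset.mem_singleton] at hmem
    rcases hmem with h | h | h | h <;> rw [h] <;> assumption
  have hm1 : m₁ = -(m₂ + m₃ + m₄) := by linarith
  rw [hm1]
  exact abs_kernel_le hm3 h32 h43
end

section
/- Let S be the kernel built from a(k) = −k² log|k| (with a(0) = 0), and fix real numbers a, b > 0. Then lim_{k → ∞} |S(k + a, −(k + b), −a, b)| / log k = 2ab; in particular, S(k + a, −(k + b), −a, b) grows like a constant multiple of log k plus a bounded remainder as k → ∞, so the logarithmic factor in the estimate |S| ≤ C₂|m₃||m₄| log(1 + |m₂/m₃|) cannot be removed. -/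
/-- The remainder `(k + c)² log (1 + c / k) - c k`, in which `log (1 + c / k)` is written as
`log (k + c) - log k`. -/
noncomputable def logRemainder (c k : ℝ) : ℝ :=
  (k + c) ^ 2 * (Real.log (k + c) - Real.log k) - c * k

/-- Both bounds come from `1 - 1 / x ≤ log x ≤ x - 1` at `x = 1 + c / k`. -/
lemma logRemainder_mem_Icc {c k : ℝ} (hc : 0 < c) (hk : 1 ≤ k) :
    logRemainder c k ∈ Set.Icc 0 (2 * c ^ 2 + c ^ 3) := by
  have hk0 : 0 < k := by linarith
  have hkc : 0 < k + c := by linarith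
  have hx : 0 < (k + c) / k := by positivity
  have hlog : Real.log (k + c) - Real.log k = Real.log ((k + c) / k) :=
    (Real.log_div hkc.ne' hk0.ne').symm
  unfold logRemainder
  rw [hlog]
  constructor
  · have h := mul_le_mul_of_nonneg_left (Real.one_sub_inv_le_log_of_pos hx) (sq_nonneg (k + c))
    have e : (k + c) ^ 2 * (1 - ((k + c) / k)⁻¹) = c * k + c ^ 2 := by
      field_simp
      ring
    nlinarith [sq_nonneg c]
  · have h := mul_le_mul_of_nonneg_left (Real.log_le_sub_one_of_pos hx) (sq_nonneg (k + c))
    have e : (k + c) ^ 2 * ((k + c) / k - 1) = c * k + 2 * c ^ 2 + c ^ 3 / k := by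
      field_simp
      ring
    have h3 : c ^ 3 / k ≤ c ^ 3 := div_le_self (by positivity) hk
    linarith

lemma Sker_aLog_eq {a b k : ℝ} (ha : 0 < a) (hb : 0 < b) (hk : 1 ≤ k) :
    Sker aLog (k + a) (-(k + b)) (-a) b = 2 * a * b * Real.log k +
      (logRemainder (a + b) k - logRemainder a k - logRemainder b k +
        (aLog a + aLog b - aLog (a - b))) := by
  have hneg (t : ℝ) : aLog (-t) = aLog t := by simp [aLog]
  have hpos {t : ℝ} (ht : 0 < t) : aLog t = -t ^ 2 * Real.log t := by
    rw [aLog, abs_of_pos ht]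
  have e12 : k + a + -(k + b) = a - b := by ring
  have e13 : k + a + -a = k := by ring
  have e14 : k + a + b = k + (a + b) := by ring
  have e23 : -(k + b) + -a = -(k + (a + b)) := by ring
  have e24 : -(k + b) + b = -k := by ring
  have e34 : -a + b = -(a - b) := by ring
  unfold Sker logRemainder
  rw [e12, e13, e14, e23, e24, e34]
  simp only [hneg]
  rw [hpos (show 0 < k + a by linarith), hpos (show 0 < k + b by linarith),
    hpos (show 0 < k + (a + b) by linarith), hpos (show 0 < k by linarith)]
  ring

/-- For the SQG kernel built from `a(k) = −k² log|k|` and fixed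
`a, b > 0`, `lim_{k → ∞} |S(k+a, −(k+b), −a, b)| / log k = 2ab`; in particular the
logarithmic factor in Lemma A.4 cannot be removed. -/
theorem statement7 (a b : ℝ) (ha : 0 < a) (hb : 0 < b) :
    Filter.Tendsto
      (fun k : ℝ => |Sker aLog (k + a) (-(k + b)) (-a) b| / Real.log k)
      Filter.atTop (nhds (2 * a * b)) := by
  set R : ℝ → ℝ := fun k => logRemainder (a + b) k - logRemainder a k - logRemainder b k +
    (aLog a + aLog b - aLog (a - b))
  obtain ⟨M, hM⟩ : ∃ M, ∀ k, 1 ≤ k → |R k| ≤ M := by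
    refine ⟨(2 * (a + b) ^ 2 + (a + b) ^ 3) + (2 * a ^ 2 + a ^ 3) + (2 * b ^ 2 + b ^ 3) +
      |aLog a + aLog b - aLog (a - b)|, fun k hk => ?_⟩
    obtain ⟨h1, h1'⟩ := logRemainder_mem_Icc (add_pos ha hb) hk
    obtain ⟨h2, h2'⟩ := logRemainder_mem_Icc ha hk
    obtain ⟨h3, h3'⟩ := logRemainder_mem_Icc hb hk
    refine (abs_add_le _ _).trans (add_le_add_left (abs_le.2 ⟨?_, ?_⟩) _) <;> linarith
  have hR0 : Filter.Tendsto (fun k => R k / Real.log k) Filter.atTop (nhds 0) := by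
    refine squeeze_zero_norm' ?_ (tendsto_const_nhds (x := M) |>.div_atTop Real.tendsto_log_atTop)
    filter_upwards [Filter.eventually_ge_atTop 1] with k hk
    have hl : 0 ≤ Real.log k := Real.log_nonneg hk
    rw [norm_div, Real.norm_eq_abs, Real.norm_eq_abs, abs_of_nonneg hl]
    exact div_le_div_of_nonneg_right (hM k hk) hl
  have hlim : Filter.Tendsto (fun k => |2 * a * b + R k / Real.log k|) Filter.atTop
      (nhds (2 * a * b)) := by
    have h := (hR0.const_add (2 * a * b)).abs
    rwa [add_zero, abs_of_pos (by positivity : 0 < 2 * a * b)] at h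
  refine hlim.congr' ?_
  filter_upwards [Filter.eventually_gt_atTop 1] with k hk
  have hl : 0 < Real.log k := Real.log_pos hk
  have hS : Sker aLog (k + a) (-(k + b)) (-a) b = 2 * a * b * Real.log k + R k :=
    Sker_aLog_eq ha hb hk.le
  have hq : 2 * a * b + R k / Real.log k = (2 * a * b * Real.log k + R k) / Real.log k := by
    field_simp
  rw [hS, hq, abs_div, abs_of_pos hl]
end

section
/- Let S : ℤ*⁴ → ℝ be invariant under all permutations of its arguments and satisfy |S(k₁,k₂,k₃,k₄)| ≤ C_S |m₃|^μ |m₄|^ν for some μ, ν ≥ 0, where (m₁,m₂,m₃,m₄) reorders (k₁,k₂,k₃,k₄) by decreasing absolute value. If s > max{μ + 1/2, ν + 1/2}, then there is a constant C such that for all zero-mean 2π-periodic real functions η, φ, ψ, χ, the quadrilinear sum satisfies Σ_{k₁,k₂,k₃,k₄ ∈ ℤ*, k₁+k₂+k₃+k₄=0} |S(k₁,k₂,k₃,k₄) η̂(k₁) φ̂(k₂) ψ̂(k₃) χ̂(k₄)| ≤ C ‖η‖_{Ḣ^{−s}} ‖φ‖_{Ḣ^s} ‖ψ‖_{Ḣ^s}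 ‖χ‖_{Ḣ^s}. -/
/-!
Write `a k = |k|^{-s} |η̂ k|` and `b, c, d` for `|k|^s` times the absolute Fourier coefficients of
`φ, ψ, χ`, so that the Sobolev norms are `ℓ²` norms. If `x, y, z` are the frequencies of
`φ, ψ, χ` and `k = -(x + y + z)` that of `η`, let `N₁ ≥ N₂ ≥ N₃` be the decreasing rearrangement
of `|x|, |y|, |z|`. The third and fourth largest of `|k|, |x|, |y|, |z|` are at most `N₂` and `N₃`
(`exists_sorted`), and `|k| ≤ 3 N₁`. Hence, with `t = s - max μ ν > 1/2`,
`|S| ≤ A 3^s |k|^{-s} |x|^s |y|^s |z|^s N₂^{-t} N₃^{-t}` (`sorted_bound`).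

Summing over the three choices for the largest frequency, it remains to bound sums such as
`∑ a(-(x+y+z)) b(x) |y|^{-t} c(y) |z|^{-t} d(z)`. Cauchy–Schwarz in `x` produces the `ℓ²` norms
of `a` and `b`, and since `|k|^{-t}` is square summable, two more applications of Cauchy–Schwarz
control the `y` and `z` sums (`young`).
-/

open scoped ENNReal Real

instance : Fact (0 < 2 * Real.pi) := ⟨by positivity⟩

/-- Squared homogeneous Sobolev norm `‖·‖²_{Ḣ^s}` of a sequence of Fourier coefficients. -/
noncomputable def hnormSq (s : ℝ) (c : ℤ → ℂ) : ℝ≥0∞ :=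
  ∑' k : {k : ℤ // k ≠ 0}, ((k : ℤ).natAbs : ℝ≥0∞) ^ (2 * s) * (‖c (k : ℤ)‖₊ : ℝ≥0∞) ^ 2

/-! ### Cauchy–Schwarz and the convolution estimate -/

/-- Cauchy–Schwarz for `ℝ≥0∞`-valued series. -/
lemma cs_tsum {ι : Type*} (f g : ι → ℝ≥0∞) :
    ∑' i, f i * g i ≤ (∑' i, f i ^ 2) ^ (1 / 2 : ℝ) * (∑' i, g i ^ 2) ^ (1 / 2 : ℝ) := by
  let _ : MeasurableSpace ι := ⊤
  have h := ENNReal.lintegral_mul_le_Lp_mul_Lq (MeasureTheory.Measure.count (α := ι))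
    Real.HolderConjugate.two_two (f := f) (g := g)
    (measurable_from_top.aemeasurable) (measurable_from_top.aemeasurable)
  simpa [MeasureTheory.lintegral_count] using h

/-- The `ℓ²` norm of a nonnegative sequence on `ℤ`. -/
noncomputable def l2 (f : ℤ → ℝ≥0∞) : ℝ≥0∞ := (∑' k, f k ^ 2) ^ (1 / 2 : ℝ)

/-- Young-type estimate `ℓ² · ℓ² · ℓ¹ · ℓ¹`, with both `ℓ¹` norms bounded by Cauchy–Schwarz
against the weight `w`. -/
lemma young (a b c d w : ℤ → ℝ≥0∞) :
    ∑' x, ∑' y, ∑' z, a (-(x + y + z)) * b x * (w y * c y) * (w z * d z) ≤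
      l2 w ^ 2 * (l2 a * l2 b * l2 c * l2 d) := by
  have h1 : ∀ y z, ∑' x, a (-(x + y + z)) * b x ≤ l2 a * l2 b := by
    intro y z
    refine (cs_tsum _ _).trans (le_of_eq ?_)
    have := ((Equiv.neg ℤ).trans (Equiv.subRight (y + z))).tsum_eq (fun k => a k ^ 2)
    have e : ∀ x, ((Equiv.neg ℤ).trans (Equiv.subRight (y + z))) x = -(x + y + z) := by
      intro x; simp; ring
    simp only [e] at this
    simp only [l2, this]
  calc
    _ = ∑' y, ∑' z, ∑' x, a (-(x + y + z)) * b x * (w y * c y) * (w z * d z) := by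
      rw [ENNReal.tsum_comm]
      exact tsum_congr fun y => ENNReal.tsum_comm
    _ ≤ ∑' y, ∑' z, (l2 a * l2 b) * (w y * c y) * (w z * d z) := by
      refine ENNReal.tsum_le_tsum fun y => ENNReal.tsum_le_tsum fun z => ?_
      rw [ENNReal.tsum_mul_right, ENNReal.tsum_mul_right]
      gcongr
      exact h1 y z
    _ = (l2 a * l2 b) * (∑' y, w y * c y) * (∑' z, w z * d z) := by
      simp only [ENNReal.tsum_mul_left, ENNReal.tsum_mul_right]
    _ ≤ (l2 a * l2 b) * (l2 w * l2 c) * (l2 w * l2 d) := by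
      gcongr <;> exact cs_tsum _ _
    _ = _ := by ring

/-! ### Weighted Fourier coefficients -/

/-- The sequence `|k|^r ‖c k‖` whose `ℓ²` norm is the `Ḣ^r` norm; the mode `k = 0` is dropped. -/
noncomputable def wseq (r : ℝ) (c : ℤ → ℂ) (k : ℤ) : ℝ≥0∞ :=
  if k = 0 then 0 else ENNReal.ofReal (|(k : ℝ)| ^ r) * (‖c k‖₊ : ℝ≥0∞)

lemma l2_wseq (r : ℝ) (c : ℤ → ℂ) : l2 (wseq r c) = hnormSq r c ^ (1 / 2 : ℝ) := by
  unfold l2 hnormSq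
  congr 1
  rw [← tsum_subtype_eq_of_support_subset (s := {k : ℤ | k ≠ 0})]
  · refine tsum_congr fun k => ?_
    obtain ⟨k, hk⟩ := k
    have hk' : k ≠ 0 := hk
    have hpos : 0 < |(k : ℝ)| := by positivity
    have e : ((k.natAbs : ℕ) : ℝ≥0∞) = ENNReal.ofReal |(k : ℝ)| := by
      rw [← ENNReal.ofReal_natCast, Nat.cast_natAbs, Int.cast_abs]
    simp only [wseq, hk', if_false, mul_pow, e]
    rw [ENNReal.ofReal_rpow_of_pos hpos, ← ENNReal.ofReal_pow (by positivity),
      mul_comm 2 r, Real.rpow_mul hpos.le]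
    norm_num
  · intro k hk h0
    simp [wseq, h0] at hk

/-- The weight `|k|^{-t}`; real powers give it the value `0` at `k = 0` when `t ≠ 0`. -/
noncomputable def wt (t : ℝ) (k : ℤ) : ℝ≥0∞ := ENNReal.ofReal (|(k : ℝ)| ^ (-t))

lemma l2_wt_ne_top {t : ℝ} (ht : 1 / 2 < t) : l2 (wt t) ≠ ⊤ := by
  unfold l2
  refine ENNReal.rpow_ne_top_of_nonneg (by norm_num) ?_
  have e : ∀ k : ℤ, wt t k ^ 2 = ENNReal.ofReal (|(k : ℝ)| ^ (-(2 * t))) := by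
    intro k
    rw [wt, ← ENNReal.ofReal_pow (by positivity), ← Real.rpow_mul_natCast (abs_nonneg _)]
    congr 2
    push_cast; ring
  simp only [e]
  exact (Real.summable_abs_int_rpow (by linarith : 1 < 2 * t)).tsum_ofReal_ne_top

/-! ### Pointwise bounds on the symbol -/

/-- Inserting `k` into a decreasingly ordered triple `x, y, z` gives a decreasingly ordered
quadruple whose last two entries are dominated by `y` and `z`. -/
lemma exists_sorted (k x y z : ℤ) (hxy : |y| ≤ |x|) (hyz : |z| ≤ |y|) :
    ∃ m₁ m₂ m₃ m₄ : ℤ, ({m₁, m₂, m₃, m₄} : Multiset ℤ) = ({k, x, y, z} : Multiset ℤ) ∧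
      |m₂| ≤ |m₁| ∧ |m₃| ≤ |m₂| ∧ |m₄| ≤ |m₃| ∧ |m₃| ≤ |y| ∧ |m₄| ≤ |z| := by
  by_cases h1 : |x| ≤ |k|
  · exact ⟨k, x, y, z, rfl, h1, hxy, hyz, le_rfl, le_rfl⟩
  by_cases h2 : |y| ≤ |k|
  · refine ⟨x, k, y, z, ?_, by omega, h2, hyz, le_rfl, le_rfl⟩
    simp only [Multiset.insert_eq_cons, ← Multiset.singleton_add]; abel
  by_cases h3 : |z| ≤ |k|
  · refine ⟨x, y, k, z, ?_, hxy, by omega, h3, by omega, le_rfl⟩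
    simp only [Multiset.insert_eq_cons, ← Multiset.singleton_add]; abel
  · refine ⟨x, y, z, k, ?_, hxy, hyz, by omega, hyz, by omega⟩
    simp only [Multiset.insert_eq_cons, ← Multiset.singleton_add]; abel

/-- Pointwise bound when `x` is the largest of `x, y, z`: since `k + x + y + z = 0`, one has
`|k| ≤ 3|x|`, so `|x|^s` absorbs the loss `|k|^s`. -/
lemma sorted_bound {μ ν A s t B : ℝ} (hA : 0 ≤ A) (hμ : 0 ≤ μ) (hν : 0 ≤ ν) (hs : 0 ≤ s)
    (h1 : t ≤ s - μ) (h2 : t ≤ s - ν) {k x y z : ℤ} (hk : k ≠ 0) (hy : y ≠ 0)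
    (hz : z ≠ 0) (hsum : k + x + y + z = 0) (hxy : |y| ≤ |x|) (hyz : |z| ≤ |y|)
    (hb : ∀ m₁ m₂ m₃ m₄ : ℤ, ({m₁, m₂, m₃, m₄} : Multiset ℤ) = ({k, x, y, z} : Multiset ℤ) →
      |m₂| ≤ |m₁| → |m₃| ≤ |m₂| → |m₄| ≤ |m₃| →
      B ≤ A * (m₃.natAbs : ℝ) ^ μ * (m₄.natAbs : ℝ) ^ ν) :
    B ≤ A * 3 ^ s * (|(k : ℝ)| ^ (-s) * |(x : ℝ)| ^ s * (|(y : ℝ)| ^ (-t) * |(y : ℝ)| ^ s) *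
      (|(z : ℝ)| ^ (-t) * |(z : ℝ)| ^ s)) := by
  obtain ⟨m₁, m₂, m₃, m₄, hm, o1, o2, o3, h3, h4⟩ := exists_sorted k x y z hxy hyz
  have hB := hb m₁ m₂ m₃ m₄ hm o1 o2 o3
  rw [Nat.cast_natAbs, Nat.cast_natAbs, Int.cast_abs, Int.cast_abs] at hB
  have h3' : |(m₃ : ℝ)| ≤ |(y : ℝ)| := by exact_mod_cast h3
  have h4' : |(m₄ : ℝ)| ≤ |(z : ℝ)| := by exact_mod_cast h4
  have kp : 0 < |(k : ℝ)| := by positivity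
  have yp : 0 < |(y : ℝ)| := by positivity
  have zp : 0 < |(z : ℝ)| := by positivity
  have y1 : 1 ≤ |(y : ℝ)| := by exact_mod_cast Int.one_le_abs hy
  have z1 : 1 ≤ |(z : ℝ)| := by exact_mod_cast Int.one_le_abs hz
  have hkx : |(k : ℝ)| ≤ 3 * |(x : ℝ)| := by
    have : |k| ≤ 3 * |x| := by
      rcases abs_cases k with _ | _ <;> rcases abs_cases x with _ | _ <;>
        rcases abs_cases y with _ | _ <;> rcases abs_cases z with _ | _ <;> omega
    exact_mod_cast this
  have hyb : |(m₃ : ℝ)| ^ μ ≤ |(y : ℝ)| ^ (-t) * |(y : ℝ)| ^ s := by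
    rw [← Real.rpow_add yp]
    exact (Real.rpow_le_rpow (abs_nonneg _) h3' hμ).trans
      (Real.rpow_le_rpow_of_exponent_le y1 (by linarith))
  have hzb : |(m₄ : ℝ)| ^ ν ≤ |(z : ℝ)| ^ (-t) * |(z : ℝ)| ^ s := by
    rw [← Real.rpow_add zp]
    exact (Real.rpow_le_rpow (abs_nonneg _) h4' hν).trans
      (Real.rpow_le_rpow_of_exponent_le z1 (by linarith))
  have hone : 1 ≤ 3 ^ s * (|(k : ℝ)| ^ (-s) * |(x : ℝ)| ^ s) := by
    have := Real.rpow_le_rpow kp.le hkx hs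
    rw [Real.mul_rpow (by norm_num) (abs_nonneg _)] at this
    calc (1 : ℝ) = |(k : ℝ)| ^ (-s) * |(k : ℝ)| ^ s := by
          rw [← Real.rpow_add kp]; simp
      _ ≤ |(k : ℝ)| ^ (-s) * (3 ^ s * |(x : ℝ)| ^ s) := by gcongr
      _ = _ := by ring
  calc B ≤ A * |(m₃ : ℝ)| ^ μ * |(m₄ : ℝ)| ^ ν := hB
    _ ≤ A * (|(y : ℝ)| ^ (-t) * |(y : ℝ)| ^ s) * (|(z : ℝ)| ^ (-t) * |(z : ℝ)| ^ s) := by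
      gcongr
    _ ≤ (3 ^ s * (|(k : ℝ)| ^ (-s) * |(x : ℝ)| ^ s)) *
        (A * (|(y : ℝ)| ^ (-t) * |(y : ℝ)| ^ s) * (|(z : ℝ)| ^ (-t) * |(z : ℝ)| ^ s)) :=
      le_mul_of_one_le_left (by positivity) hone
    _ = _ := by ring

/-- Pointwise bound without an ordering assumption: one term for each choice of the largest of
`x, y, z`. -/
lemma pointwise_bound {μ ν A s t B : ℝ} (hA : 0 ≤ A) (hμ : 0 ≤ μ) (hν : 0 ≤ ν) (hs : 0 ≤ s)
    (h1 : t ≤ s - μ) (h2 : t ≤ s - ν) {k x y z : ℤ} (hk : k ≠ 0) (hx : x ≠ 0) (hy : y ≠ 0)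
    (hz : z ≠ 0) (hsum : k + x + y + z = 0)
    (hb : ∀ m₁ m₂ m₃ m₄ : ℤ, ({m₁, m₂, m₃, m₄} : Multiset ℤ) = ({k, x, y, z} : Multiset ℤ) →
      |m₂| ≤ |m₁| → |m₃| ≤ |m₂| → |m₄| ≤ |m₃| →
      B ≤ A * (m₃.natAbs : ℝ) ^ μ * (m₄.natAbs : ℝ) ^ ν) :
    B ≤ A * 3 ^ s * ((|(k : ℝ)| ^ (-s) * |(x : ℝ)| ^ s * |(y : ℝ)| ^ s * |(z : ℝ)| ^ s) *
      (|(y : ℝ)| ^ (-t) * |(z : ℝ)| ^ (-t) + |(x : ℝ)| ^ (-t) * |(z : ℝ)| ^ (-t) +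
        |(x : ℝ)| ^ (-t) * |(y : ℝ)| ^ (-t))) := by
  have key : ∀ x' y' z' : ℤ, x' ≠ 0 → y' ≠ 0 → z' ≠ 0 → k + x' + y' + z' = 0 →
      ({k, x', y', z'} : Multiset ℤ) = {k, x, y, z} → |y'| ≤ |x'| → |z'| ≤ |y'| →
      B ≤ A * 3 ^ s * (|(k : ℝ)| ^ (-s) * |(x' : ℝ)| ^ s * (|(y' : ℝ)| ^ (-t) * |(y' : ℝ)| ^ s) *
        (|(z' : ℝ)| ^ (-t) * |(z' : ℝ)| ^ s)) :=
    fun x' y' z' _ hy' hz' hs' hm o1 o2 =>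
      sorted_bound hA hμ hν hs h1 h2 hk hy' hz' hs' o1 o2
        (fun m₁ m₂ m₃ m₄ h => hb m₁ m₂ m₃ m₄ (h.trans hm))
  have p1 : 0 ≤ A * 3 ^ s * ((|(k : ℝ)| ^ (-s) * |(x : ℝ)| ^ s * |(y : ℝ)| ^ s *
    |(z : ℝ)| ^ s) * (|(y : ℝ)| ^ (-t) * |(z : ℝ)| ^ (-t))) := by positivity
  have p2 : 0 ≤ A * 3 ^ s * ((|(k : ℝ)| ^ (-s) * |(x : ℝ)| ^ s * |(y : ℝ)| ^ s *
    |(z : ℝ)| ^ s) * (|(x : ℝ)| ^ (-t) * |(z : ℝ)| ^ (-t))) := by positivity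
  have p3 : 0 ≤ A * 3 ^ s * ((|(k : ℝ)| ^ (-s) * |(x : ℝ)| ^ s * |(y : ℝ)| ^ s *
    |(z : ℝ)| ^ s) * (|(x : ℝ)| ^ (-t) * |(y : ℝ)| ^ (-t))) := by positivity
  rcases le_total |x| |y| with a | a <;> rcases le_total |y| |z| with b | b <;>
    rcases le_total |x| |z| with c | c
  · have := key z y x hz hy hx (by omega)
      (by simp only [Multiset.insert_eq_cons, ← Multiset.singleton_add]; abel) b a
    linarith
  · have := key z y x hz hy hx (by omega)
      (by simp only [Multiset.insert_eq_cons, ← Multiset.singleton_add]; abel) b a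
    linarith
  · have := key y z x hy hz hx (by omega)
      (by simp only [Multiset.insert_eq_cons, ← Multiset.singleton_add]; abel) b c
    linarith
  · have := key y x z hy hx hz (by omega)
      (by simp only [Multiset.insert_eq_cons, ← Multiset.singleton_add]; abel) a c
    linarith
  · have := key z x y hz hx hy (by omega)
      (by simp only [Multiset.insert_eq_cons, ← Multiset.singleton_add]; abel) c a
    linarith
  · have := key x z y hx hz hy (by omega)
      (by simp only [Multiset.insert_eq_cons, ← Multiset.singleton_add]; abel) c b
    linarith
  · have := key x y z hx hy hz (by omega) rfl a b
    linarith
  · have := key x y z hx hy hz (by omega) rfl a b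
    linarith

/-! ### The quadrilinear estimate -/

/-- the quadrilinear form estimate (5.15). If `S` is permutation
invariant with `|S| ≤ C_S |m₃|^μ |m₄|^ν` and `s > max{μ + 1/2, ν + 1/2}`, then there is
`C` such that for all zero-mean `2π`-periodic real functions `η, φ, ψ, χ`,
`Σ_{k₁+k₂+k₃+k₄=0} |S η̂(k₁) φ̂(k₂) ψ̂(k₃) χ̂(k₄)| ≤ C ‖η‖_{Ḣ^{−s}} ‖φ‖_{Ḣ^s} ‖ψ‖_{Ḣ^s} ‖χ‖_{Ḣ^s}`,
stated in `ℝ≥0∞`. -/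
theorem statement13 (S : ℤ → ℤ → ℤ → ℤ → ℝ) (μ ν C_S s : ℝ) (hμ : 0 ≤ μ) (hν : 0 ≤ ν)
    (hperm : ∀ (k : Fin 4 → ℤ) (σ : Equiv.Perm (Fin 4)), (∀ i, k i ≠ 0) →
      S (k 0) (k 1) (k 2) (k 3) = S (k (σ 0)) (k (σ 1)) (k (σ 2)) (k (σ 3)))
    (hbound : ∀ k₁ k₂ k₃ k₄ m₁ m₂ m₃ m₄ : ℤ, k₁ ≠ 0 → k₂ ≠ 0 → k₃ ≠ 0 → k₄ ≠ 0 →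
      ({m₁, m₂, m₃, m₄} : Multiset ℤ) = ({k₁, k₂, k₃, k₄} : Multiset ℤ) →
      |m₂| ≤ |m₁| → |m₃| ≤ |m₂| → |m₄| ≤ |m₃| →
      |S k₁ k₂ k₃ k₄| ≤ C_S * (m₃.natAbs : ℝ) ^ μ * (m₄.natAbs : ℝ) ^ ν)
    (hs : max (μ + 1 / 2) (ν + 1 / 2) < s) :
    ∃ C : ℝ, 0 < C ∧
      ∀ η φ ψ χ : AddCircle (2 * Real.pi) → ℝ,
        fourierCoeff (fun x => (η x : ℂ)) 0 = 0 →
        fourierCoeff (fun x => (φ x : ℂ)) 0 = 0 →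
        fourierCoeff (fun x => (ψ x : ℂ)) 0 = 0 →
        fourierCoeff (fun x => (χ x : ℂ)) 0 = 0 →
        (∑' q : {q : ℤ × ℤ × ℤ × ℤ // q.1 ≠ 0 ∧ q.2.1 ≠ 0 ∧ q.2.2.1 ≠ 0 ∧ q.2.2.2 ≠ 0 ∧
              q.1 + q.2.1 + q.2.2.1 + q.2.2.2 = 0},
            ENNReal.ofReal |S q.1.1 q.1.2.1 q.1.2.2.1 q.1.2.2.2| *
              (‖fourierCoeff (fun x => (η x : ℂ)) q.1.1‖₊ : ℝ≥0∞) *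
              (‖fourierCoeff (fun x => (φ x : ℂ)) q.1.2.1‖₊ : ℝ≥0∞) *
              (‖fourierCoeff (fun x => (ψ x : ℂ)) q.1.2.2.1‖₊ : ℝ≥0∞) *
              (‖fourierCoeff (fun x => (χ x : ℂ)) q.1.2.2.2‖₊ : ℝ≥0∞))
          ≤ ENNReal.ofReal C *
              (hnormSq (-s) (fourierCoeff (fun x => (η x : ℂ)))) ^ (1 / 2 : ℝ) *
              (hnormSq s (fourierCoeff (fun x => (φ x : ℂ)))) ^ (1 / 2 : ℝ) *
              (hnormSq s (fourierCoeff (fun x => (ψ x : ℂ)))) ^ (1 / 2 : ℝ) *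
              (hnormSq s (fourierCoeff (fun x => (χ x : ℂ)))) ^ (1 / 2 : ℝ) := by
  have hs1 : μ + 1 / 2 < s := (le_max_left _ _).trans_lt hs
  have hs2 : ν + 1 / 2 < s := (le_max_right _ _).trans_lt hs
  set t : ℝ := s - max μ ν with ht
  have ht1 : t ≤ s - μ := by have := le_max_left μ ν; linarith
  have ht2 : t ≤ s - ν := by have := le_max_right μ ν; linarith
  have hth : 1 / 2 < t := by
    have : max μ ν < s - 1 / 2 := max_lt (by linarith) (by linarith)
    linarith
  set A : ℝ := |C_S| + 1 with hAdef
  have hA : 0 < A := by positivity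
  set W : ℝ := (l2 (wt t)).toReal with hW
  have hWe : l2 (wt t) = ENNReal.ofReal W := (ENNReal.ofReal_toReal (l2_wt_ne_top hth)).symm
  have hW0 : 0 ≤ W := ENNReal.toReal_nonneg
  -- `W ^ 2 + 1` instead of `W ^ 2` makes positivity of the constant immediate.
  refine ⟨A * 3 ^ s * (3 * (W ^ 2 + 1)), by positivity, ?_⟩
  intro η φ ψ χ _ _ _ _
  set e := fourierCoeff (fun x => (η x : ℂ))
  set f := fourierCoeff (fun x => (φ x : ℂ))
  set g := fourierCoeff (fun x => (ψ x : ℂ))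
  set h := fourierCoeff (fun x => (χ x : ℂ))
  simp only [← l2_wseq]
  set a := wseq (-s) e with ha
  set b := wseq s f with hb
  set c := wseq s g with hc
  set d := wseq s h with hd
  set w := wt t with hw
  let F : ℤ × ℤ × ℤ → ℝ≥0∞ := fun p =>
    a (-(p.1 + p.2.1 + p.2.2)) * b p.1 * (w p.2.1 * c p.2.1) * (w p.2.2 * d p.2.2) +
    a (-(p.1 + p.2.1 + p.2.2)) * c p.2.1 * (w p.1 * b p.1) * (w p.2.2 * d p.2.2) +
    a (-(p.1 + p.2.1 + p.2.2)) * d p.2.2 * (w p.1 * b p.1) * (w p.2.1 * c p.2.1)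
  have hF : ∑' p, F p ≤ 3 * (l2 w ^ 2 * (l2 a * l2 b * l2 c * l2 d)) := by
    rw [ENNReal.tsum_prod']
    simp only [ENNReal.tsum_prod', F, ENNReal.tsum_add]
    have y1 := young a b c d w
    have y2 : ∑' x, ∑' y, ∑' z, a (-(x + y + z)) * c y * (w x * b x) * (w z * d z) ≤
        l2 w ^ 2 * (l2 a * l2 b * l2 c * l2 d) := by
      rw [ENNReal.tsum_comm]
      refine le_trans (le_of_eq ?_) ((young a c b d w).trans (le_of_eq (by ring)))
      refine tsum_congr fun y => tsum_congr fun x => tsum_congr fun z => ?_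
      rw [add_comm x y]
    have y3 : ∑' x, ∑' y, ∑' z, a (-(x + y + z)) * d z * (w x * b x) * (w y * c y) ≤
        l2 w ^ 2 * (l2 a * l2 b * l2 c * l2 d) := by
      refine le_trans (le_of_eq ?_) ((young a d b c w).trans (le_of_eq (by ring)))
      rw [ENNReal.tsum_comm
        (f := fun z x => ∑' y, a (-(z + x + y)) * d z * (w x * b x) * (w y * c y))]
      refine tsum_congr fun x => ?_
      rw [ENNReal.tsum_comm]
      refine tsum_congr fun z => tsum_congr fun y => ?_
      rw [show x + y + z = z + x + y by ring]
    calc _ ≤ _ := add_le_add (add_le_add y1 y2) y3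
      _ = _ := by ring
  have hpt : ∀ q : {q : ℤ × ℤ × ℤ × ℤ // q.1 ≠ 0 ∧ q.2.1 ≠ 0 ∧ q.2.2.1 ≠ 0 ∧ q.2.2.2 ≠ 0 ∧
        q.1 + q.2.1 + q.2.2.1 + q.2.2.2 = 0},
      ENNReal.ofReal |S q.1.1 q.1.2.1 q.1.2.2.1 q.1.2.2.2| * (‖e q.1.1‖₊ : ℝ≥0∞) *
        (‖f q.1.2.1‖₊ : ℝ≥0∞) * (‖g q.1.2.2.1‖₊ : ℝ≥0∞) * (‖h q.1.2.2.2‖₊ : ℝ≥0∞) ≤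
      ENNReal.ofReal (A * 3 ^ s) * F q.1.2 := by
    rintro ⟨⟨k, x, y, z⟩, hk, hx, hy, hz, hsum⟩
    dsimp only at hk hx hy hz hsum ⊢
    have hB := pointwise_bound hA.le hμ hν (by linarith) ht1 ht2 hk hx hy hz hsum
      (B := |S k x y z|) (fun m₁ m₂ m₃ m₄ hm o1 o2 o3 =>
        (hbound k x y z m₁ m₂ m₃ m₄ hk hx hy hz hm o1 o2 o3).trans (by
          have : C_S ≤ A := by have := le_abs_self C_S; linarith
          gcongr))
    have hB' := ENNReal.ofReal_le_ofReal hB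
    have hk' : -(x + y + z) = k := by omega
    refine (mul_le_mul_left (mul_le_mul_left (mul_le_mul_left (mul_le_mul_left hB' _) _) _) _).trans
      (le_of_eq ?_)
    simp only [F, hk', ha, hb, hc, hd, hw, wseq, wt, hk, hx, hy, hz, if_false]
    simp (disch := positivity) only [ENNReal.ofReal_mul, ENNReal.ofReal_add]
    ring
  have hinj : Function.Injective (fun q : {q : ℤ × ℤ × ℤ × ℤ // q.1 ≠ 0 ∧ q.2.1 ≠ 0 ∧
      q.2.2.1 ≠ 0 ∧ q.2.2.2 ≠ 0 ∧ q.1 + q.2.1 + q.2.2.1 + q.2.2.2 = 0} => q.1.2) := by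
    rintro ⟨⟨k, p⟩, h1⟩ ⟨⟨k', p'⟩, h2⟩ hp
    obtain rfl : p = p' := hp
    have : k = k' := by
      have e1 := h1.2.2.2.2
      have e2 := h2.2.2.2.2
      dsimp only at e1 e2
      omega
    subst this
    rfl
  calc _ ≤ ∑' q : {q : ℤ × ℤ × ℤ × ℤ // q.1 ≠ 0 ∧ q.2.1 ≠ 0 ∧ q.2.2.1 ≠ 0 ∧ q.2.2.2 ≠ 0 ∧
        q.1 + q.2.1 + q.2.2.1 + q.2.2.2 = 0}, ENNReal.ofReal (A * 3 ^ s) * F q.1.2 :=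
        ENNReal.tsum_le_tsum hpt
    _ ≤ ENNReal.ofReal (A * 3 ^ s) * ∑' p, F p := by
        rw [ENNReal.tsum_mul_left]
        gcongr
        exact ENNReal.tsum_comp_le_tsum_of_injective hinj F
    _ ≤ ENNReal.ofReal (A * 3 ^ s) * (3 * (l2 w ^ 2 * (l2 a * l2 b * l2 c * l2 d))) := by
        gcongr
    _ = ENNReal.ofReal (A * 3 ^ s * (3 * W ^ 2)) * l2 a * l2 b * l2 c * l2 d := by
        rw [ENNReal.ofReal_mul (p := A * 3 ^ s) (by positivity),
          ENNReal.ofReal_mul (p := 3) (by norm_num), ENNReal.ofReal_pow hW0, ← hWe]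
        simp only [ENNReal.ofReal_ofNat]
        ring
    _ ≤ _ := by
        gcongr
        linarith
end

section
/- For 1 < α < 2, the integral ∫₀^∞ (1 − cos η) / η^{4−α} dη converges and 2(2 − α) ∫₀^∞ (1 − cos η) / η^{4−α} dη = 2(2 − α) sin(πα/2) Γ(α − 3) = b_α / (3 − α), where b_α = 2 sin(πα/2) Γ(α − 1); consequently, for all k ∈ ℝ, 2(2 − α) ∫₀^∞ (1 − cos(kη)) / η^{4−α} dη = c_α |k|^{3−α} with c_α = b_α / (3 − α). -/
/-!
The integrand is nonnegative on `(0, ∞)`, so Tonelli's theorem gives convergence and value at once.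
Writing `Γ(β) η^(-β) = ∫₀^∞ t^(β-1) exp (-η t) dt` with `β = 4 - α`, and using the elementary Laplace
transform `∫₀^∞ (1 - cos η) exp (-η t) dη = 1 / (t (1 + t²))`, the integral becomes
`Γ(β)⁻¹ ∫₀^∞ t^(β-2) / (1 + t²) dt`. A second use of Tonelli, with
`1 / (1 + t²) = ∫₀^∞ exp (-(1 + t²) r) dr`, evaluates the latter as
`Γ(u/2) Γ(1 - u/2) / 2 = π / (2 sin (π u / 2))`, where `u = β - 1`. The reflection formula at `α - 3`
turns the result into `sin (π α / 2) Γ(α - 3)`, and `Γ(s + 1) = s Γ(s)`, used twice, identifies the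
constant `b_α / (3 - α)`. The case of general `k ≠ 0` is the substitution `η ↦ |k| η`.
-/

open scoped Real
open Filter

/-- `b_α = 2 sin(πα/2) Γ(α−1)`. -/
noncomputable def bCoef (α : ℝ) : ℝ := 2 * Real.sin (Real.pi * α / 2) * Real.Gamma (α - 1)

/-- `c_α = b_α / (3 − α)`. -/
noncomputable def cCoef (α : ℝ) : ℝ := bCoef α / (3 - α)

open MeasureTheory Set in
/-- Tonelli's theorem on the open quadrant for a nonnegative kernel, integrability included: if
the sections in `x` have integrals `B y` and `B` is integrable with integral `c`, then the
integrals `A x` of the sections in `y` are integrable in `x` with the same integral `c`. -/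
lemma tonelli_quadrant {K : ℝ → ℝ → ℝ} {A B : ℝ → ℝ} {c : ℝ}
    (hm : Measurable (Function.uncurry K)) (hK : ∀ x > 0, ∀ y > 0, 0 ≤ K x y)
    (hA : ∀ x > 0, ∫ y in Ioi 0, K x y = A x)
    (hBi : ∀ y > 0, IntegrableOn (fun x => K x y) (Ioi 0))
    (hB : ∀ y > 0, ∫ x in Ioi 0, K x y = B y)
    (hBint : IntegrableOn B (Ioi 0)) (hc : ∫ y in Ioi 0, B y = c) :
    IntegrableOn A (Ioi 0) ∧ ∫ x in Ioi 0, A x = c := by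
  have hP : Integrable (Function.uncurry K)
      ((volume.restrict (Ioi 0)).prod (volume.restrict (Ioi 0))) := by
    rw [integrable_prod_iff' hm.aestronglyMeasurable]
    constructor
    · filter_upwards [ae_restrict_mem measurableSet_Ioi] with y hy using hBi y hy
    · refine hBint.congr ?_
      filter_upwards [ae_restrict_mem measurableSet_Ioi] with y hy
      rw [← hB y hy]
      refine setIntegral_congr_fun measurableSet_Ioi fun x hx => ?_
      simp [Function.uncurry, abs_of_nonneg (hK x hx y hy)]
  constructor
  · refine hP.integral_prod_left.congr ?_
    filter_upwards [ae_restrict_mem measurableSet_Ioi] with x hx using hA x hx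
  · rw [← hc, ← setIntegral_congr_fun measurableSet_Ioi fun x hx => hA x hx,
      integral_integral_swap hP]
    exact setIntegral_congr_fun measurableSet_Ioi fun y hy => hB y hy

open MeasureTheory Set in
lemma integral_rpow_div_one_add_sq {u : ℝ} (hu0 : 0 < u) (hu2 : u < 2) :
    IntegrableOn (fun t : ℝ => t ^ (u - 1) / (1 + t ^ 2)) (Ioi 0) ∧
      ∫ t in Ioi (0 : ℝ), t ^ (u - 1) / (1 + t ^ 2) = π / (2 * Real.sin (π * (u / 2))) := by
  have hG : ∫ r in Ioi (0 : ℝ), r ^ ((1 - u / 2) - 1) * Real.exp (-(1 * r))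
      = Real.Gamma (1 - u / 2) := by
    rw [Real.integral_rpow_mul_exp_neg_mul_Ioi (by linarith) one_pos]; simp
  have hGpos : 0 < Real.Gamma (1 - u / 2) := Real.Gamma_pos_of_pos (by linarith)
  have hGi : IntegrableOn (fun r : ℝ => r ^ ((1 - u / 2) - 1) * Real.exp (-(1 * r))) (Ioi 0) :=
    Integrable.of_integral_ne_zero (by rw [hG]; exact hGpos.ne')
  have hfac (r t : ℝ) : t ^ (u - 1) * Real.exp (-((1 + t ^ 2) * r))
      = Real.exp (-r) * (t ^ (u - 1) * Real.exp (-r * t ^ (2 : ℝ))) := by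
    rw [Real.rpow_two, mul_left_comm, ← Real.exp_add]
    congr 2; ring
  -- The kernel comes from `1 / (1 + t²) = ∫₀^∞ exp (-(1 + t²) r) dr`.
  refine tonelli_quadrant (K := fun t r => t ^ (u - 1) * Real.exp (-((1 + t ^ 2) * r)))
    (B := fun r => Real.Gamma (u / 2) / 2 * (r ^ ((1 - u / 2) - 1) * Real.exp (-(1 * r))))
    ?_ ?_ ?_ ?_ ?_ (hGi.const_mul _) ?_
  · unfold Function.uncurry
    fun_prop
  · intro t ht r hr
    have : 0 < t := ht
    positivity
  · intro t ht
    have h := Real.integral_rpow_mul_exp_neg_mul_Ioi one_pos (by positivity : 0 < 1 + t ^ 2)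
    simp only [sub_self, Real.rpow_zero, one_mul, Real.rpow_one, Real.Gamma_one, mul_one] at h
    rw [integral_const_mul, h]
    ring
  · intro r hr
    simp only [hfac]
    exact (integrableOn_rpow_mul_exp_neg_mul_rpow (by linarith) two_pos hr).const_mul _
  · intro r hr
    simp only [hfac]
    rw [integral_const_mul, integral_rpow_mul_exp_neg_mul_rpow two_pos (by linarith) hr]
    rw [show -(u - 1 + 1) / 2 = 1 - u / 2 - 1 by ring, show (u - 1 + 1) / 2 = u / 2 by ring, one_mul]
    ring
  · rw [integral_const_mul, hG, div_mul_eq_mul_div, Real.Gamma_mul_Gamma_one_sub]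
    rw [div_div, mul_comm]

open MeasureTheory Set in
lemma integral_one_sub_cos_mul_exp {t : ℝ} (ht : 0 < t) :
    IntegrableOn (fun x : ℝ => (1 - Real.cos x) * Real.exp (-(x * t))) (Ioi 0) ∧
      ∫ x in Ioi (0 : ℝ), (1 - Real.cos x) * Real.exp (-(x * t)) = 1 / (t * (1 + t ^ 2)) := by
  have hpos : 0 < 1 + t ^ 2 := by positivity
  set G : ℝ → ℝ := fun x => Real.exp (-(x * t)) *
    (-(1 / t) + (t * Real.cos x - Real.sin x) / (1 + t ^ 2)) with hGdef
  have hd : ∀ x ∈ Ici (0 : ℝ), HasDerivAt G ((1 - Real.cos x) * Real.exp (-(x * t))) x := by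
    intro x _
    have h1 : HasDerivAt (fun x : ℝ => Real.exp (-(x * t))) (Real.exp (-(x * t)) * (-(1 * t))) x :=
      ((hasDerivAt_id x).mul_const t).neg.exp
    have h2 := ((((Real.hasDerivAt_cos x).const_mul t).sub (Real.hasDerivAt_sin x)).div_const
      (1 + t ^ 2)).const_add (-(1 / t))
    convert! h1.mul h2 using 1
    simp only [Pi.sub_apply]
    field_simp
    ring
  have hn : ∀ x ∈ Ioi (0 : ℝ), 0 ≤ (1 - Real.cos x) * Real.exp (-(x * t)) := fun x _ =>
    mul_nonneg (by linarith [Real.cos_le_one x]) (Real.exp_pos _).le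
  have hl : Tendsto G atTop (nhds 0) := by
    have he : Tendsto (fun x : ℝ => Real.exp (-(x * t))) atTop (nhds 0) :=
      Real.tendsto_exp_neg_atTop_nhds_zero.comp (tendsto_id.atTop_mul_const ht)
    refine he.zero_mul_isBoundedUnder_le ?_
    refine isBoundedUnder_of ⟨1 / t + (t + 1) / (1 + t ^ 2), fun x => ?_⟩
    simp only [Function.comp, Real.norm_eq_abs]
    refine (abs_add_le _ _).trans ?_
    rw [abs_neg, abs_of_pos (by positivity : 0 < 1 / t), abs_div, abs_of_pos hpos]
    gcongr
    refine (abs_sub _ _).trans ?_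
    rw [abs_mul, abs_of_pos ht]
    have := Real.abs_cos_le_one x
    have := Real.abs_sin_le_one x
    nlinarith
  refine ⟨integrableOn_Ioi_deriv_of_nonneg' hd hn hl, ?_⟩
  rw [integral_Ioi_of_hasDerivAt_of_nonneg' hd hn hl]
  simp only [hGdef, zero_mul, neg_zero, Real.exp_zero, Real.cos_zero, Real.sin_zero]
  field_simp
  ring

open MeasureTheory Set in
/-- Euler's formula `Γ(β) η^(-β) = ∫₀^∞ t^(β-1) exp (-η t) dt` turns the integral into
`∫₀^∞ t^(β-2) / (1 + t²) dt`. -/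
lemma integral_one_sub_cos_div_rpow {β : ℝ} (h1 : 1 < β) (h3 : β < 3) :
    IntegrableOn (fun x : ℝ => (1 - Real.cos x) / x ^ β) (Ioi 0) ∧
      ∫ x in Ioi (0 : ℝ), (1 - Real.cos x) / x ^ β =
        π / (2 * Real.sin (π * ((β - 1) / 2))) / Real.Gamma β := by
  obtain ⟨hi, hv⟩ := integral_rpow_div_one_add_sq (u := β - 1) (by linarith) (by linarith)
  have hΓ : 0 < Real.Gamma β := Real.Gamma_pos_of_pos (by linarith)
  have hfac (x t : ℝ) : (1 - Real.cos x) * t ^ (β - 1) * Real.exp (-(x * t))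
      = t ^ (β - 1) * ((1 - Real.cos x) * Real.exp (-(x * t))) := by ring
  have key := tonelli_quadrant
    (K := fun x t => (1 - Real.cos x) * t ^ (β - 1) * Real.exp (-(x * t)))
    (A := fun x => Real.Gamma β * ((1 - Real.cos x) / x ^ β))
    (B := fun t => t ^ (β - 1 - 1) / (1 + t ^ 2)) ?_ ?_ ?_ ?_ ?_ hi hv
  · refine ⟨?_, ?_⟩
    · have := key.1.const_mul (Real.Gamma β)⁻¹
      simpa [IntegrableOn, ← mul_assoc, hΓ.ne'] using this
    · rw [eq_div_iff hΓ.ne', mul_comm, ← integral_const_mul]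
      exact key.2
  · unfold Function.uncurry
    fun_prop
  · intro x hx t ht
    have h0 : 0 < t := ht
    have := Real.cos_le_one x
    have : 0 ≤ 1 - Real.cos x := by linarith
    positivity
  · intro x hx
    simp only [mul_assoc]
    rw [integral_const_mul, Real.integral_rpow_mul_exp_neg_mul_Ioi (by linarith) hx,
      one_div, Real.inv_rpow (le_of_lt hx)]
    ring
  · intro t ht
    simp only [hfac]
    exact (integral_one_sub_cos_mul_exp ht).1.const_mul _
  · intro t ht
    simp only [hfac]
    rw [integral_const_mul, (integral_one_sub_cos_mul_exp ht).2, Real.rpow_sub_one ht.ne' (β - 1)]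
    field_simp

open MeasureTheory Set in
lemma tendsto_improper {f : ℝ → ℝ} (hf : IntegrableOn f (Ioi 0)) :
    Tendsto (fun p : ℝ × ℝ => ∫ x in p.1..p.2, f x) ((nhdsWithin 0 (Ioi 0)) ×ˢ atTop)
      (nhds (∫ x in Ioi 0, f x)) := by
  have ha : Tendsto (fun p : ℝ × ℝ => p.1) ((nhdsWithin 0 (Ioi 0)) ×ˢ atTop)
      (nhdsWithin (0 : ℝ) (Ioi 0)) := tendsto_fst
  have hb : Tendsto (fun p : ℝ × ℝ => p.2) ((nhdsWithin (0 : ℝ) (Ioi 0)) ×ˢ atTop) atTop :=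
    tendsto_snd
  have hcov := (aecover_Ioi_of_Ioi (μ := volume) (ha.mono_right nhdsWithin_le_nhds)).inter
    (aecover_Iic hb)
  refine (hcov.integral_tendsto_of_countably_generated hf).congr' ?_
  have h1 : ∀ᶠ p : ℝ × ℝ in (nhdsWithin 0 (Ioi 0)) ×ˢ atTop, p.1 ∈ Ioi (0 : ℝ) :=
    ha.eventually self_mem_nhdsWithin
  have h2 : ∀ᶠ p : ℝ × ℝ in (nhdsWithin 0 (Ioi 0)) ×ˢ atTop, p.1 < 1 :=
    (ha.mono_right nhdsWithin_le_nhds).eventually (eventually_lt_nhds one_pos)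
  filter_upwards [h1, h2, hb.eventually_ge_atTop 1] with p hp0 hp1 hp2
  have hp0' : 0 < p.1 := hp0
  rw [intervalIntegral.integral_of_le (by linarith), Ioi_inter_Iic,
    Measure.restrict_restrict measurableSet_Ioc, inter_eq_left.2]
  exact fun x hx => hp0'.trans hx.1

/-- The reflection formula at `α - 3`, where `1 - (α - 3) = 4 - α`. -/
lemma reflection_value {α : ℝ} (hα1 : 1 < α) (hα2 : α < 2) :
    π / (2 * Real.sin (π * ((4 - α - 1) / 2))) / Real.Gamma (4 - α) =
      Real.sin (π * α / 2) * Real.Gamma (α - 3) := by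
  have hΓ : 0 < Real.Gamma (4 - α) := Real.Gamma_pos_of_pos (by linarith)
  have hπ := Real.pi_pos
  have hs : 0 < Real.sin (π * α / 2) := Real.sin_pos_of_pos_of_lt_pi (by positivity) (by nlinarith)
  have hc : Real.cos (π * α / 2) < 0 :=
    Real.cos_neg_of_pi_div_two_lt_of_lt (by nlinarith) (by nlinarith)
  have e1 : Real.sin (π * ((4 - α - 1) / 2)) = -Real.cos (π * α / 2) := by
    rw [show π * ((4 - α - 1) / 2) = π / 2 - π * α / 2 + π by ring, Real.sin_add_pi,
      Real.sin_pi_div_two_sub]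
  have e2 : Real.sin (π * (α - 3)) = -(2 * Real.sin (π * α / 2) * Real.cos (π * α / 2)) := by
    rw [← Real.sin_two_mul, show π * (α - 3) = 2 * (π * α / 2) - π - 2 * π by ring,
      Real.sin_sub_two_pi, Real.sin_sub_pi]
  have h := Real.Gamma_mul_Gamma_one_sub (α - 3)
  rw [show 1 - (α - 3) = 4 - α by ring, e2, ← eq_div_iff hΓ.ne'] at h
  rw [h, e1]
  have := hc.ne
  field_simp

lemma two_mul_value {α : ℝ} (hα2 : α < 2) :
    2 * (2 - α) * (Real.sin (π * α / 2) * Real.Gamma (α - 3)) = bCoef α / (3 - α) := by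
  have h1 := Real.Gamma_add_one (s := α - 3) (by linarith)
  have h2 := Real.Gamma_add_one (s := α - 2) (by linarith)
  rw [show α - 3 + 1 = α - 2 by ring] at h1
  rw [show α - 2 + 1 = α - 1 by ring] at h2
  rw [bCoef, h2, h1, eq_div_iff (by linarith)]
  ring

open MeasureTheory Set in
lemma integral_one_sub_cos_mul_div_rpow {α k : ℝ} (hα1 : 1 < α) (hα2 : α < 2) (hk : k ≠ 0) :
    IntegrableOn (fun x : ℝ => (1 - Real.cos (k * x)) / x ^ (4 - α)) (Ioi 0) ∧
      ∫ x in Ioi (0 : ℝ), (1 - Real.cos (k * x)) / x ^ (4 - α) =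
        |k| ^ (3 - α) * (Real.sin (π * α / 2) * Real.Gamma (α - 3)) := by
  obtain ⟨hi, hv⟩ := integral_one_sub_cos_div_rpow (β := 4 - α) (by linarith) (by linarith)
  rw [reflection_value hα1 hα2] at hv
  have hk' : 0 < |k| := abs_pos.2 hk
  have hsc : EqOn (fun x : ℝ => |k| ^ (4 - α) * ((1 - Real.cos (|k| * x)) / (|k| * x) ^ (4 - α)))
      (fun x : ℝ => (1 - Real.cos (k * x)) / x ^ (4 - α)) (Ioi 0) := by
    intro x hx
    have hx0 : 0 < x := hx
    have hc : Real.cos (|k| * x) = Real.cos (k * x) := by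
      rw [← Real.cos_abs (k * x), abs_mul, abs_of_pos hx0]
    simp only [hc, Real.mul_rpow hk'.le hx0.le]
    have := (Real.rpow_pos_of_pos hk' (4 - α)).ne'
    field_simp
  constructor
  · refine IntegrableOn.congr_fun (Integrable.const_mul ?_ _) hsc measurableSet_Ioi
    have := (integrableOn_Ioi_comp_mul_left_iff
      (fun x : ℝ => (1 - Real.cos x) / x ^ (4 - α)) 0 hk').2 (by rwa [mul_zero])
    exact this
  · rw [← setIntegral_congr_fun measurableSet_Ioi hsc, integral_const_mul,
      integral_comp_mul_left_Ioi (fun x : ℝ => (1 - Real.cos x) / x ^ (4 - α)) 0 hk', mul_zero, hv,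
      smul_eq_mul, show (4 - α) = (3 - α) + 1 by ring, Real.rpow_add_one hk'.ne']
    field_simp

/-- For `1 < α < 2`, the improper integral `∫₀^∞ (1 − cos η)/η^{4−α} dη`
(understood as the limit of `∫_ε^R` as `ε → 0⁺`, `R → ∞`) converges to
`sin(πα/2) Γ(α−3)`, with `2(2−α) sin(πα/2) Γ(α−3) = b_α/(3−α)`; consequently, for all
`k ∈ ℝ`, `2(2−α) ∫₀^∞ (1 − cos(kη))/η^{4−α} dη = c_α |k|^{3−α}`. -/
theorem statement15 (α : ℝ) (hα1 : 1 < α) (hα2 : α < 2) :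
    Filter.Tendsto (fun p : ℝ × ℝ => ∫ η in p.1..p.2, (1 - Real.cos η) / η ^ (4 - α))
      ((nhdsWithin 0 (Set.Ioi 0)) ×ˢ Filter.atTop)
      (nhds (Real.sin (Real.pi * α / 2) * Real.Gamma (α - 3))) ∧
    2 * (2 - α) * (Real.sin (Real.pi * α / 2) * Real.Gamma (α - 3)) = bCoef α / (3 - α) ∧
    ∀ k : ℝ,
      Filter.Tendsto
        (fun p : ℝ × ℝ => 2 * (2 - α) * ∫ η in p.1..p.2, (1 - Real.cos (k * η)) / η ^ (4 - α))
        ((nhdsWithin 0 (Set.Ioi 0)) ×ˢ Filter.atTop)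
        (nhds (cCoef α * |k| ^ (3 - α))) := by
  refine ⟨?_, two_mul_value hα2, fun k => ?_⟩
  · obtain ⟨hi, hv⟩ := integral_one_sub_cos_div_rpow (β := 4 - α) (by linarith) (by linarith)
    rw [← reflection_value hα1 hα2, ← hv]
    exact tendsto_improper hi
  · rcases eq_or_ne k 0 with rfl | hk
    · simp [Real.zero_rpow (by linarith : 3 - α ≠ 0)]
    · obtain ⟨hi, hv⟩ := integral_one_sub_cos_mul_div_rpow hα1 hα2 hk
      have h := (tendsto_improper hi).const_mul (2 * (2 - α))
      rwa [hv, mul_left_comm, two_mul_value hα2, ← cCoef, mul_comm (|k| ^ _)] at h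
end

section
/- Let 0 < α < 2, G(x) = |x|^{α−2}, F(x, y) = ∫₀^y (x² + s²)^{(α−2)/2} ds, and K(x, y) = G(x) y − F(x, y). For every M > 0 there exists a constant C > 0 such that |K(x, y)| ≤ C |x|^{α−4} for all real x with |x| ≥ 1 and all real y with |y| ≤ M. -/
/-!
Put `a = x²` and `q = (α - 2) / 2 ∈ (-1, 0)`. Then `G(x) = a ^ q`, so
`K(x, y) = ∫₀^y (a ^ q - (a + s²) ^ q) ds`. Since `-1 ≤ q ≤ 0`, the integrand lies between `0` and
`a ^ (q - 1) * s²` (`rpow_sub_rpow_add_le`), and `a ^ (q - 1) = |x| ^ (α - 4)`. Integrating over an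
interval of length at most `M`, on which `s² ≤ M²`, gives the estimate with `C = M³`.
-/

/-- The Green's-function profile `G(x) = |x|^{α−2}`. -/
noncomputable def Gfun (α x : ℝ) : ℝ := |x| ^ (α - 2)

/-- `F(x,y) = ∫₀^y (x² + s²)^{(α−2)/2} ds`. -/
noncomputable def Ffun (α x y : ℝ) : ℝ := ∫ s in (0 : ℝ)..y, (x ^ 2 + s ^ 2) ^ ((α - 2) / 2)

/-- `K(x,y) = G(x) y − F(x,y)`. -/
noncomputable def Kfun (α x y : ℝ) : ℝ := Gfun α x * y - Ffun α x y

/-- A Bernoulli-type inequality: after dividing by `a ^ q` it reads `1 - u ≤ (1 + u) ^ q` with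
`u = t / a`, which follows from `1 - u ≤ (1 + u)⁻¹ ≤ (1 + u) ^ q`. -/
lemma rpow_sub_rpow_add_le {a t q : ℝ} (ha : 0 < a) (ht : 0 ≤ t) (hq : -1 ≤ q) :
    a ^ q - (a + t) ^ q ≤ a ^ (q - 1) * t := by
  have hu : 0 ≤ t / a := by positivity
  have hsplit : (a + t) ^ q = a ^ q * (1 + t / a) ^ q := by
    rw [← Real.mul_rpow ha.le (by positivity)]
    congr 1
    field_simp
  have hinv : (1 + t / a)⁻¹ ≤ (1 + t / a) ^ q := by
    rw [← Real.rpow_neg_one]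
    exact Real.rpow_le_rpow_of_exponent_le (by linarith) hq
  have hlin : 1 - t / a ≤ (1 + t / a)⁻¹ := by
    rw [← one_div, le_div_iff₀ (by positivity)]
    nlinarith [sq_nonneg (t / a)]
  have hpow : a ^ (q - 1) * t = a ^ q * (t / a) := by
    rw [Real.rpow_sub_one ha.ne']
    ring
  rw [hsplit, hpow]
  nlinarith [mul_le_mul_of_nonneg_left (hlin.trans hinv) (Real.rpow_nonneg ha.le q)]

/-- the decay estimate for the kernel `K`. For `0 < α < 2` and every
`M > 0` there is `C > 0` such that `|K(x,y)| ≤ C |x|^{α−4}` whenever `|x| ≥ 1` and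
`|y| ≤ M`. -/
theorem statement19 (α : ℝ) (hα0 : 0 < α) (hα2 : α < 2) (M : ℝ) (hM : 0 < M) :
    ∃ C : ℝ, 0 < C ∧ ∀ x y : ℝ, 1 ≤ |x| → |y| ≤ M →
      |Kfun α x y| ≤ C * |x| ^ (α - 4) := by
  refine ⟨M ^ 3, by positivity, fun x y hx hy => ?_⟩
  have hx0 : 0 < |x| := by linarith
  have ha : 0 < x ^ 2 := by rw [← sq_abs]; positivity
  have hpow : ∀ r : ℝ, (x ^ 2) ^ r = |x| ^ (2 * r) := fun r => by
    rw [← sq_abs, ← Real.rpow_natCast_mul hx0.le]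
    norm_num
  have hG : Gfun α x = (x ^ 2) ^ ((α - 2) / 2) := by
    rw [hpow, Gfun]
    congr 1
    ring
  have hD : |x| ^ (α - 4) = (x ^ 2) ^ ((α - 2) / 2 - 1) := by
    rw [hpow]
    congr 1
    ring
  have hcont : Continuous fun s : ℝ => (x ^ 2 + s ^ 2) ^ ((α - 2) / 2) :=
    Continuous.rpow_const (by fun_prop) fun s => Or.inl (by positivity)
  have hK : Kfun α x y =
      ∫ s in (0 : ℝ)..y, ((x ^ 2) ^ ((α - 2) / 2) - (x ^ 2 + s ^ 2) ^ ((α - 2) / 2)) := by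
    rw [intervalIntegral.integral_sub (by simp) (hcont.intervalIntegrable 0 y), Kfun, Ffun, hG,
      intervalIntegral.integral_const, smul_eq_mul]
    ring
  have hbound : ∀ s ∈ Set.uIoc 0 y,
      ‖(x ^ 2) ^ ((α - 2) / 2) - (x ^ 2 + s ^ 2) ^ ((α - 2) / 2)‖ ≤ |x| ^ (α - 4) * M ^ 2 := by
    intro s hs
    have hsy : |s| ≤ |y| := by
      simpa using Set.abs_sub_left_of_mem_uIcc (Set.uIoc_subset_uIcc hs)
    have hs2 : s ^ 2 ≤ M ^ 2 := sq_le_sq' (by linarith [neg_abs_le s]) (by linarith [le_abs_self s])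
    have hanti : (x ^ 2 + s ^ 2) ^ ((α - 2) / 2) ≤ (x ^ 2) ^ ((α - 2) / 2) :=
      Real.rpow_le_rpow_of_nonpos ha (by linarith [sq_nonneg s]) (by linarith)
    rw [Real.norm_eq_abs, abs_of_nonneg (by linarith), hD]
    exact (rpow_sub_rpow_add_le ha (sq_nonneg s) (by linarith)).trans (by gcongr)
  rw [hK, ← Real.norm_eq_abs]
  calc _ ≤ |x| ^ (α - 4) * M ^ 2 * |y - 0| :=
        intervalIntegral.norm_integral_le_of_norm_le_const hbound
    _ ≤ |x| ^ (α - 4) * M ^ 2 * M := by rw [sub_zero]; gcongr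
    _ = M ^ 3 * |x| ^ (α - 4) := by ring
end
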